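/- For every finite simple graph H with at least one edge there exists a constant C_H such that for all n, the deterministic query complexity of the forbidden-subgraph property Q_n^H is at least n(n-1)/2 − C_H. -/

import Mathlib

/-- A deterministic decision tree over a set of Boolean variables indexed by `ι`. -/
inductive DecisionTree (ι : Type) : Type
  | leaf : Bool → DecisionTree ι
  | node : ι → DecisionTree ι → DecisionTree ι → DecisionTree ι

namespace DecisionTree

/-- Evaluate a decision tree on an input assignment. -/
def eval {ι : Type} : DecisionTree ι → (ι → Bool) → Bool
  | leaf b, _ => b
  | node i t f, x => if x i then t.eval x else f.eval x

/-- The depth (worst-case number of queries) of a decision tree. -/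
def depth {ι : Type} : DecisionTree ι → ℕ
  | leaf _ => 0
  | node _ t f => max t.depth f.depth + 1

end DecisionTree

/-- The variables of a graph property on `n` vertices: pairs `i < j`. -/
def EdgeVar (n : ℕ) := {p : Fin n × Fin n // p.1 < p.2}

/-- The graph on `Fin n` determined by an assignment to the adjacency variables. -/
def graphOfInput {n : ℕ} (x : EdgeVar n → Bool) : SimpleGraph (Fin n) :=
  SimpleGraph.fromRel (fun i j => ∃ h : i < j, x ⟨(i, j), h⟩ = true)

/-- The deterministic query (decision-tree) complexity of a set of graphs on `Fin n`,
viewed as a Boolean function of the adjacency variables. -/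
noncomputable def queryComplexity {n : ℕ} (P : Set (SimpleGraph (Fin n))) : ℕ :=
  sInf {d | ∃ T : DecisionTree (EdgeVar n),
    (∀ x, T.eval x = true ↔ graphOfInput x ∈ P) ∧ T.depth ≤ d}

/-- A set of graphs on `Fin n` is evasive if its query complexity is `n(n-1)/2`,
the total number of adjacency variables. -/
def Evasive {n : ℕ} (P : Set (SimpleGraph (Fin n))) : Prop :=
  queryComplexity P = n * (n - 1) / 2

/-- `G` contains a (not necessarily induced) subgraph isomorphic to `H`. -/
def ContainsCopy {V : Type} (H : SimpleGraph V) {W : Type} (G : SimpleGraph W) : Prop :=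
  ∃ f : V → W, Function.Injective f ∧ ∀ v w : V, H.Adj v w → G.Adj (f v) (f w)

/-- The forbidden-subgraph property `Q_n^H`: graphs on `Fin n` containing no copy of `H`. -/
def ForbiddenSubgraphProperty {V : Type} (H : SimpleGraph V) (n : ℕ) :
    Set (SimpleGraph (Fin n)) :=
  {G | ¬ ContainsCopy H G}

/-- A prime `p` is an `ε`-near Fermat prime if `2^s ∣ p - 1` and `(p-1)/2^s ≤ p^ε`
for some `s ≥ 0`. -/
def NearFermatPrime (ε : ℝ) (p : ℕ) : Prop :=
  p.Prime ∧ ∃ s : ℕ, 2 ^ s ∣ p - 1 ∧ (((p - 1) / 2 ^ s : ℕ) : ℝ) ≤ (p : ℝ) ^ ε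

/-!
Suppose a shallow decision tree decides `H`-freeness for the graphs between two edge sets `B ⊆ E`.
By Kahn, Saks and Sturtevant, the order complex of the `H`-free graphs strictly above `B` is then
acyclic over `ZMod 2`. Smith's theorem for a `2`-group `P` and Lefschetz's fixed point theorem for
an element `γ` normalizing `P` make the number of `⟨P, γ⟩`-invariant `H`-free graphs between `B` and
`E` even.

Split the vertices into `2 ^ 2 ^ a` blocks, each a finite field of characteristic two, and
`χ(H) - 1` cyclic parts of bounded size. Let `P` be the group of translations of the blocks, and let
`γ` multiply each block by a generator of its units and rotate each part. An invariant graph is a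
blow-up of a graph on the set of blocks and parts, and it is `H`-free iff `H` has no homomorphism to
that graph. The automorphism group of the binary tree whose leaves are the blocks is a `2`-group, so
modulo two only those graphs count in which two blocks are adjacent iff their height of branching
lies in some set `A`, and all blocks are adjacent to the same set `N` of parts. Here `H` has no
homomorphism iff `2 ^ |A| + |N| ≤ χ(H) - 1`, and the number of such pairs is odd because
`(2 ^ a).choose k` is even for `0 < k < 2 ^ a`. Hence, apart from the boundedly many pairs of
vertices within the union of the parts, every pair is queried.
-/

section Chains

variable {X : Type*}

/-- The mod 2 chains supported on the family of faces `K`; the empty set counts as a face, so that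
all complexes are augmented. -/
def chains (K : Set (Finset X)) : Submodule (ZMod 2) (Finset X → ZMod 2) where
  carrier := {c | ∀ s ∉ K, c s = 0}
  add_mem' hc hd s hs := by simp [hc s hs, hd s hs]
  zero_mem' _ _ := rfl
  smul_mem' r c hc s hs := by simp [hc s hs]

lemma chains_mono {K K' : Set (Finset X)} (h : K ⊆ K') : chains K ≤ chains K' :=
  fun _ hc s hs => hc s fun h' => hs (h h')

variable [DecidableEq X]

/-- The cone operator: adjoin the vertex `x` to every face of a chain, faces containing `x` being
sent to zero. -/
def cone (x : X) : (Finset X → ZMod 2) →ₗ[ZMod 2] (Finset X → ZMod 2) where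
  toFun c s := if x ∈ s then c (s.erase x) else 0
  map_add' c d := by ext s; by_cases h : x ∈ s <;> simp [h]
  map_smul' r c := by ext s; by_cases h : x ∈ s <;> simp [h]

/-- The link operator: delete the vertex `x` from the faces containing it and drop the others. -/
def contract (x : X) : (Finset X → ZMod 2) →ₗ[ZMod 2] (Finset X → ZMod 2) where
  toFun c s := if x ∈ s then 0 else c (insert x s)
  map_add' c d := by ext s; by_cases h : x ∈ s <;> simp [h]
  map_smul' r c := by ext s; by_cases h : x ∈ s <;> simp [h]

lemma cone_apply (x : X) (c : Finset X → ZMod 2) (s : Finset X) :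
    cone x c s = if x ∈ s then c (s.erase x) else 0 := rfl

lemma contract_apply (x : X) (c : Finset X → ZMod 2) (s : Finset X) :
    contract x c s = if x ∈ s then 0 else c (insert x s) := rfl

variable [Fintype X]

/-- The augmented mod 2 simplicial boundary: the coefficient of `s` collects those of the faces
having `s` as a facet. -/
def boundary : (Finset X → ZMod 2) →ₗ[ZMod 2] (Finset X → ZMod 2) where
  toFun c s := ∑ y ∈ sᶜ, c (insert y s)
  map_add' c d := by ext s; simp [Finset.sum_add_distrib]
  map_smul' r c := by ext s; simp [Finset.mul_sum]

lemma boundary_apply (c : Finset X → ZMod 2) (s : Finset X) :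
    boundary c s = ∑ y ∈ sᶜ, c (insert y s) := rfl

lemma boundary_cone (x : X) (c : Finset X → ZMod 2) :
    boundary (cone x c) = c + cone x (boundary c) := by
  ext s
  simp only [boundary_apply, cone_apply, Pi.add_apply]
  by_cases h : x ∈ s
  · have hcompl : (s.erase x)ᶜ = insert x sᶜ := by
      ext y; by_cases hy : y = x <;> simp [hy]
    rw [if_pos h, hcompl, Finset.sum_insert (by simpa using h), Finset.insert_erase h, ← add_assoc,
      CharTwo.add_self_eq_zero, zero_add]
    refine Finset.sum_congr rfl fun y hy => ?_
    have hyx : y ≠ x := by rintro rfl; simp [h] at hy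
    rw [if_pos (by simp [h]), Finset.erase_insert_of_ne hyx]
  · rw [if_neg h, add_zero, Finset.sum_eq_single x]
    · simp [h]
    · intro y _ hyx
      simp [h, hyx.symm]
    · simp [h]

lemma contract_boundary (x : X) (c : Finset X → ZMod 2) :
    contract x (boundary c) = boundary (contract x c) := by
  ext s
  simp only [boundary_apply, contract_apply]
  by_cases h : x ∈ s
  · simp [h]
  · have hcompl : sᶜ = insert x (insert x s)ᶜ := by
      ext y; by_cases hy : y = x <;> simp [hy, h]
    rw [if_neg h, hcompl, Finset.sum_insert (by simp)]
    simp only [Finset.mem_insert_self, if_true, zero_add]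
    refine Finset.sum_congr rfl fun y hy => ?_
    have hyx : x ≠ y := by rintro rfl; simp at hy
    rw [if_neg (by simp [h, hyx]), Finset.insert_comm]

lemma boundary_boundary (c : Finset X → ZMod 2) : boundary (boundary c) = 0 := by
  ext s
  simp only [boundary_apply, Pi.zero_apply]
  rw [Finset.sum_sigma']
  refine Finset.sum_involution (fun p _ => ⟨p.2, p.1⟩) ?_ ?_ ?_ ?_
  · rintro ⟨y, z⟩ _
    simp only [Finset.insert_comm z y]
    exact CharTwo.add_self_eq_zero _
  · rintro ⟨y, z⟩ h _ h'
    simp only [Sigma.mk.injEq, Finset.mem_sigma, Finset.mem_compl] at h h'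
    grind
  · rintro ⟨y, z⟩ h
    simp only [Finset.mem_sigma, Finset.mem_compl] at h ⊢
    grind
  · rintro ⟨y, z⟩ _
    rfl

lemma boundary_mem_chains {K : Set (Finset X)} (hK : IsLowerSet K) {c : Finset X → ZMod 2}
    (hc : c ∈ chains K) : boundary c ∈ chains K := fun s hs =>
  Finset.sum_eq_zero fun y _ => hc _ fun h => hs (hK (Finset.subset_insert y s) h)

/-- Exactness of the augmented mod 2 chain complex of `K`. The void complex is acyclic, the complex
`{∅}` is not. -/
def Acyclic (K : Set (Finset X)) : Prop :=
  ∀ z ∈ chains K, boundary z = 0 → ∃ c ∈ chains K, boundary c = z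

lemma acyclic_of_cone {K : Set (Finset X)} (x : X) (hx : ∀ s ∈ K, insert x s ∈ K) :
    Acyclic K := by
  refine fun z hz hz0 => ⟨cone x z, fun s hs => ?_, by rw [boundary_cone, hz0, map_zero, add_zero]⟩
  by_cases h : x ∈ s
  · simpa [cone_apply, h] using hz _ fun h' => hs (Finset.insert_erase h ▸ hx _ h')
  · simp [cone_apply, h]

lemma acyclic_of_link_of_deletion {K : Set (Finset X)} (hK : IsLowerSet K) (x : X)
    (hlink : Acyclic {s | x ∉ s ∧ insert x s ∈ K}) (hdel : Acyclic {s | x ∉ s ∧ s ∈ K}) :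
    Acyclic K := by
  intro z hz hz0
  obtain ⟨d, hd, hdz⟩ := hlink (contract x z)
    (fun s hs => by
      by_cases h : x ∈ s
      · simp [contract_apply, h]
      · simpa [contract_apply, h] using hz _ fun h' => hs ⟨h, h'⟩)
    (by rw [← contract_boundary, hz0, map_zero])
  have hdK : d ∈ chains K :=
    chains_mono (fun s hs => hK (Finset.subset_insert x s) hs.2) hd
  have hcone : cone x d ∈ chains K := fun s hs => by
    by_cases h : x ∈ s
    · simpa [cone_apply, h] using hd _ fun h' => hs (by simpa [h] using h'.2)
    · simp [cone_apply, h]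
  -- Adding the boundary of the cone over `d` pushes `z` off the star of `x`.
  have hdel_mem : z + boundary (cone x d) ∈ chains {s | x ∉ s ∧ s ∈ K} := fun s hs => by
    rw [boundary_cone, hdz]
    by_cases h : x ∈ s
    · simp [cone_apply, contract_apply, h, hd s fun h' => h'.1 h, CharTwo.add_self_eq_zero]
    · have hsK : s ∉ K := fun h' => hs ⟨h, h'⟩
      simp [cone_apply, h, hz s hsK, hdK s hsK]
  obtain ⟨e, he, hez⟩ := hdel _ hdel_mem (by rw [map_add, hz0, boundary_boundary, add_zero])
  refine ⟨e + cone x d, add_mem (chains_mono (fun s hs => hs.2) he) hcone, ?_⟩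
  rw [map_add, hez, CharTwo.add_cancel_right]

end Chains

section Smith

open scoped Pointwise

variable {X G : Type*} [DecidableEq X] [Group G] [MulAction G X] {g : G} {K : Set (Finset X)}

/-- The action of a vertex permutation on chains. -/
def transport (g : G) : (Finset X → ZMod 2) →ₗ[ZMod 2] (Finset X → ZMod 2) :=
  LinearMap.funLeft (ZMod 2) (ZMod 2) (g • ·)

lemma transport_apply (g : G) (c : Finset X → ZMod 2) (s : Finset X) :
    transport g c s = c (g • s) := rfl

lemma transport_mem_chains (hgK : ∀ s, g • s ∈ K ↔ s ∈ K) {c : Finset X → ZMod 2}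
    (hc : c ∈ chains K) : transport g c ∈ chains K :=
  fun s hs => hc _ fun h => hs ((hgK s).1 h)

lemma transport_transport (hgK : ∀ s, g • s ∈ K ↔ s ∈ K) (hgg : ∀ s ∈ K, g • g • s = s)
    {c : Finset X → ZMod 2} (hc : c ∈ chains K) : transport g (transport g c) = c := by
  ext s
  by_cases hs : s ∈ K
  · simp only [transport_apply, hgg s hs]
  · rw [hc s hs]
    exact hc _ (by rwa [hgK, hgK])

lemma add_transport_apply_eq_zero (c : Finset X → ZMod 2) {s : Finset X} (hs : g • s = s) :
    (c + transport g c) s = 0 := by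
  rw [Pi.add_apply, transport_apply, hs, CharTwo.add_self_eq_zero]

lemma exists_eq_add_add_transport [Finite X] (hgg : ∀ s ∈ K, g • g • s = s)
    {z : Finset X → ZMod 2} (hz : z ∈ chains K) (hinv : transport g z = z) :
    ∃ f ∈ chains {s ∈ K | g • s = s}, ∃ d ∈ chains K, z = f + (d + transport g d) := by
  have := Fintype.ofFinite X
  let φ := Fintype.equivFin (Finset X)
  refine ⟨fun s => if g • s = s then z s else 0, fun s hs => ?_,
    fun s => if φ s < φ (g • s) then z s else 0, fun s hs => by simp [hz s hs], ?_⟩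
  · by_cases h : s ∈ K
    · exact if_neg fun h' => hs ⟨h, h'⟩
    · simp [hz s h]
  · ext s
    have hzg : z (g • s) = z s := congrFun hinv s
    simp only [Pi.add_apply, transport_apply, hzg]
    by_cases hs : s ∈ K
    · by_cases h : g • s = s
      · simp [h]
      · have hne : φ s ≠ φ (g • s) := fun h' => h (φ.injective h').symm
        rcases lt_or_gt_of_ne hne with h' | h' <;> simp [h, hgg s hs, h', h'.le]
    · simp [hz s hs]

variable [Fintype X]

lemma boundary_transport (g : G) (c : Finset X → ZMod 2) :
    boundary (transport g c) = transport g (boundary c) := by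
  ext s
  simp only [transport_apply, boundary_apply, Finset.smul_finset_insert]
  exact Finset.sum_equiv (MulAction.toPerm g) (by simp) (by simp)

lemma Acyclic.exists_boundary_eq_of_le_card (h : Acyclic K) {i : ℕ} {z : Finset X → ZMod 2}
    (hz : z ∈ chains K) (hi : z ∈ chains {s | i ≤ s.card}) (hz0 : boundary z = 0) :
    ∃ c ∈ chains K, c ∈ chains {s | i + 1 ≤ s.card} ∧ boundary c = z := by
  obtain ⟨c, hc, rfl⟩ := h z hz hz0
  refine ⟨fun s => if i + 1 ≤ s.card then c s else 0, fun s hs => by simp [hc s hs],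
    fun s hs => if_neg hs, ?_⟩
  ext s
  simp only [boundary_apply]
  by_cases hs : i ≤ s.card
  · refine Finset.sum_congr rfl fun y hy => if_pos ?_
    rw [Finset.card_insert_of_notMem (by simpa using hy)]
    omega
  · rw [← boundary_apply c, hi s hs]
    refine Finset.sum_eq_zero fun y hy => if_neg ?_
    rw [Finset.card_insert_of_notMem (by simpa using hy)]
    omega

lemma exists_eq_add_add_transport_of_boundary_eq (hK : IsLowerSet {s ∈ K | g • s = s})
    (hgg : ∀ s ∈ K, g • g • s = s) {y c : Finset X → ZMod 2}
    (hy : y ∈ chains K) (hinv : transport g y = y) (hyc : boundary y = c + transport g c) :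
    ∃ f d, boundary f = 0 ∧ d ∈ chains K ∧ y = f + (d + transport g d) := by
  obtain ⟨f, hf, d, hd, rfl⟩ := exists_eq_add_add_transport hgg hy hinv
  refine ⟨f, d, ?_, hd, rfl⟩
  ext s
  by_cases hs : s ∈ {s ∈ K | g • s = s}
  · have h := congrFun hyc s
    rwa [map_add, map_add, boundary_transport, Pi.add_apply, add_transport_apply_eq_zero _ hs.2,
      add_transport_apply_eq_zero _ hs.2, add_zero] at h
  · exact boundary_mem_chains hK hf s hs

lemma Acyclic.exists_transport_eq_self (h : Acyclic K) (hK : IsLowerSet K)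
    (hKg : IsLowerSet {s ∈ K | g • s = s}) (hgK : ∀ s, g • s ∈ K ↔ s ∈ K)
    (hgg : ∀ s ∈ K, g • g • s = s) (n i : ℕ) (hni : Fintype.card X + 1 = n + i)
    {z : Finset X → ZMod 2} (hz : z ∈ chains K) (hzi : z ∈ chains {s | i ≤ s.card})
    (hinv : transport g z = z) (hz0 : boundary z = 0) :
    ∃ c ∈ chains K, transport g c = c ∧ boundary c = z := by
  induction n generalizing i z with
  | zero =>
    have hz_zero : z = 0 := funext fun s => hzi s fun h' => by
      have := Finset.card_le_univ s
      have : i ≤ s.card := h'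
      omega
    exact ⟨0, zero_mem _, map_zero _, by rw [hz_zero, map_zero]⟩
  | succ n ih =>
    obtain ⟨c, hc, hci, rfl⟩ := h.exists_boundary_eq_of_le_card hz hzi hz0
    obtain ⟨y, hy, hyg, hyc⟩ := ih (i + 1) (by omega) (add_mem hc (transport_mem_chains hgK hc))
      (add_mem hci fun s hs => hci _ (by simpa using hs))
      (by rw [map_add, transport_transport hgK hgg hc, add_comm])
      (by rw [map_add, boundary_transport, hinv, CharTwo.add_self_eq_zero])
    obtain ⟨f, d, hf0, hd, rfl⟩ :=
      exists_eq_add_add_transport_of_boundary_eq hKg hgg hy hyg hyc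
    refine ⟨c + boundary d, add_mem hc (boundary_mem_chains hK hd), ?_, ?_⟩
    · rw [map_add, map_add, hf0, zero_add, boundary_transport] at hyc
      rw [map_add, ← CharTwo.add_eq_zero]
      calc transport g c + transport g (boundary d) + (c + boundary d)
          = (boundary d + transport g (boundary d)) + (c + transport g c) := by abel
        _ = 0 := by rw [hyc, CharTwo.add_self_eq_zero]
    · rw [map_add, boundary_boundary, add_zero]

/-- **Smith's theorem** for an involution of a mod 2 acyclic complex whose invariant faces form a
subcomplex. -/
theorem Acyclic.invariant_of_involution (h : Acyclic K) (hK : IsLowerSet K)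
    (hKg : IsLowerSet {s ∈ K | g • s = s}) (hgK : ∀ s, g • s ∈ K ↔ s ∈ K)
    (hgg : ∀ s ∈ K, g • g • s = s) : Acyclic {s ∈ K | g • s = s} := by
  intro z hz hz0
  have hinv : transport g z = z := by
    ext s
    by_cases hs : g • s = s
    · rw [transport_apply, hs]
    · rw [hz s fun h' => hs h'.2]
      exact hz _ fun h' => hs (smul_left_cancel g h'.2)
  obtain ⟨c, hc, hcg, rfl⟩ := h.exists_transport_eq_self hK hKg hgK hgg (Fintype.card X + 1) 0 rfl
    (chains_mono (fun s hs => hs.1) hz) (fun s hs => absurd (Nat.zero_le _) hs) hinv hz0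
  obtain ⟨f, hf, d, -, rfl⟩ := exists_eq_add_add_transport hgg hc hcg
  refine ⟨f, hf, funext fun s => ?_⟩
  by_cases hs : s ∈ {s ∈ K | g • s = s}
  · rw [map_add, map_add, boundary_transport, Pi.add_apply,
      add_transport_apply_eq_zero _ hs.2, add_zero]
  · rw [boundary_mem_chains hKg hf s hs, hz s hs]

end Smith

section Lefschetz

lemma exists_homotopy_of_exact {k M : Type*} [Field k] [AddCommGroup M] [Module k M]
    (D : M →ₗ[k] M) (hD : D ∘ₗ D = 0) (hex : ∀ z, D z = 0 → ∃ c, D c = z) :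
    ∃ h : M →ₗ[k] M, D ∘ₗ h + h ∘ₗ D = LinearMap.id := by
  obtain ⟨σ, hσ⟩ : ∃ σ : M →ₗ[k] M, ∀ c, D (σ (D c)) = D c := by
    obtain ⟨τ, hτ⟩ := D.rangeRestrict.exists_rightInverse_of_surjective D.range_rangeRestrict
    obtain ⟨σ, rfl⟩ := τ.exists_extend
    exact ⟨σ, fun c => congrArg Subtype.val (LinearMap.congr_fun hτ (D.rangeRestrict c))⟩
  have hDD : ∀ v, D (D v) = 0 := LinearMap.congr_fun hD
  refine ⟨σ ∘ₗ (LinearMap.id - σ ∘ₗ D), LinearMap.ext fun v => ?_⟩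
  obtain ⟨c, hc⟩ := hex (v - σ (D v)) (by rw [map_sub, hσ, sub_self])
  have hv : D (σ (v - σ (D v))) = v - σ (D v) := by rw [← hc, hσ]
  calc D (σ (v - σ (D v))) + σ (D v - σ (D (D v))) = v - σ (D v) + σ (D v) := by
        rw [hv, hDD, map_zero, sub_zero]
    _ = v := sub_add_cancel _ _

lemma trace_eq_zero_of_exact {k M : Type*} [Field k] [CharP k 2] [AddCommGroup M] [Module k M]
    [FiniteDimensional k M] (D g : M →ₗ[k] M) (hD : D ∘ₗ D = 0)
    (hex : ∀ z, D z = 0 → ∃ c, D c = z) (hg : g ∘ₗ D = D ∘ₗ g) :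
    LinearMap.trace k M g = 0 := by
  obtain ⟨h, hid⟩ := exists_homotopy_of_exact D hD hex
  calc LinearMap.trace k M g
      = LinearMap.trace k M (g ∘ₗ (D ∘ₗ h + h ∘ₗ D)) := by rw [hid, LinearMap.comp_id]
    _ = LinearMap.trace k M (g ∘ₗ D ∘ₗ h) + LinearMap.trace k M ((g ∘ₗ h) ∘ₗ D) := by
        rw [LinearMap.comp_add, map_add, LinearMap.comp_assoc]
    _ = LinearMap.trace k M (g ∘ₗ D ∘ₗ h) + LinearMap.trace k M (g ∘ₗ D ∘ₗ h) := by
        rw [LinearMap.trace_comp_comm' D (g ∘ₗ h), ← LinearMap.comp_assoc, hg,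
          LinearMap.comp_assoc]
    _ = 0 := CharTwo.add_self_eq_zero _

open scoped Pointwise

variable {X G : Type*} [DecidableEq X] [Group G] [MulAction G X] {g : G} {K : Set (Finset X)}

lemma trace_transport_restrict_chains [Finite X] (hgK : ∀ s, g • s ∈ K ↔ s ∈ K) :
    LinearMap.trace (ZMod 2) (chains K)
      ((transport g).restrict fun _ => transport_mem_chains hgK) =
      (Nat.card {s // s ∈ K ∧ g • s = s} : ZMod 2) := by
  classical
  have := Fintype.ofFinite X
  let π : (Finset X → ZMod 2) →ₗ[ZMod 2] (Finset X → ZMod 2) :=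
    LinearMap.pi fun s => if s ∈ K then LinearMap.proj s else 0
  have hπ : ∀ c s, π c s = if s ∈ K then c s else 0 := fun c s => by
    by_cases hs : s ∈ K <;> simp [π, hs]
  have hπ_mem : ∀ c, (transport g ∘ₗ π) c ∈ chains K := fun c =>
    transport_mem_chains hgK fun s hs => (hπ c s).trans (if_neg hs)
  have hrestrict : (transport g ∘ₗ π).restrict (fun c (_ : c ∈ chains K) => hπ_mem c) =
      (transport g).restrict fun _ => transport_mem_chains hgK := by
    ext1 c
    have hπc : π c = c := funext fun s => by
      by_cases hs : s ∈ K <;> simp [hπ, hs, c.2 s]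
    exact Subtype.ext (congrArg (transport g) hπc)
  have hdiag : ∀ s, (transport g ∘ₗ π) (Pi.single s 1) s = if s ∈ K ∧ g • s = s then 1 else 0 :=
    fun s => by simp [transport_apply, hπ, hgK, Pi.single_apply, ite_and]
  rw [← hrestrict, LinearMap.trace_restrict_eq_of_forall_mem _ _ hπ_mem,
    LinearMap.trace_eq_matrix_trace _ (Pi.basisFun (ZMod 2) (Finset X)), Matrix.trace,
    Nat.card_eq_fintype_card, Fintype.card_subtype, ← Finset.sum_boole]
  refine Finset.sum_congr rfl fun s _ => ?_
  rw [Matrix.diag_apply, LinearMap.toMatrix_apply, Pi.basisFun_apply, Pi.basisFun_repr, hdiag]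

/-- **The Lefschetz fixed point theorem** mod 2; the empty face is counted. -/
theorem Acyclic.even_card_invariant [Fintype X] (h : Acyclic K) (hK : IsLowerSet K)
    (hgK : ∀ s, g • s ∈ K ↔ s ∈ K) : Even (Nat.card {s // s ∈ K ∧ g • s = s}) := by
  rw [← ZMod.natCast_eq_zero_iff_even, ← trace_transport_restrict_chains hgK]
  refine trace_eq_zero_of_exact (boundary.restrict fun _ => boundary_mem_chains hK) _ ?_ ?_ ?_
  · ext1 c
    exact Subtype.ext (boundary_boundary c.1)
  · rintro ⟨z, hz⟩ hz0
    obtain ⟨c, hc, hcz⟩ := h z hz (congrArg Subtype.val hz0)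
    exact ⟨⟨c, hc⟩, Subtype.ext hcz⟩
  · ext1 c
    exact Subtype.ext (boundary_transport g c.1).symm

end Lefschetz

section OrderComplex

variable {α : Type*} [PartialOrder α]

/-- The order complex of the poset `Q`: its faces are the finite chains of `Q`. -/
def orderComplex (Q : Set α) : Set (Finset α) :=
  {c | (c : Set α) ⊆ Q ∧ IsChain (· ≤ ·) (c : Set α)}

lemma mem_orderComplex {Q : Set α} {c : Finset α} :
    c ∈ orderComplex Q ↔ (c : Set α) ⊆ Q ∧ IsChain (· ≤ ·) (c : Set α) := Iff.rfl

lemma isLowerSet_orderComplex (Q : Set α) : IsLowerSet (orderComplex Q) := fun _ _ hdc hc =>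
  ⟨(Finset.coe_subset.2 hdc).trans hc.1, hc.2.mono (Finset.coe_subset.2 hdc)⟩

lemma orderComplex_empty : orderComplex (∅ : Set α) = {∅} := by
  ext c
  rw [mem_orderComplex, Set.subset_empty_iff, Finset.coe_eq_empty, Set.mem_singleton_iff]
  exact and_iff_left_of_imp fun h => by simp [h]

variable {Q : Set α} {a : α}

lemma deletion_orderComplex : {c | a ∉ c ∧ c ∈ orderComplex Q} = orderComplex (Q \ {a}) := by
  ext c
  simp only [mem_orderComplex, Set.mem_ofPred_eq, Set.subset_sdiff, Set.disjoint_singleton_right,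
    Finset.mem_coe]
  tauto

lemma link_orderComplex [DecidableEq α] (ha : a ∈ Q) :
    {c | a ∉ c ∧ insert a c ∈ orderComplex Q} = orderComplex {b ∈ Q | b < a ∨ a < b} := by
  ext c
  simp only [mem_orderComplex, Set.mem_ofPred_eq, Finset.coe_insert]
  constructor
  · rintro ⟨hac, hcQ, hc⟩
    refine ⟨fun b hb => ⟨hcQ (Set.mem_insert_of_mem a hb), ?_⟩, hc.mono (Set.subset_insert a _)⟩
    have hba : b ≠ a := fun h => hac (h ▸ hb)
    exact (hc (Set.mem_insert_of_mem a hb) (Set.mem_insert a _) hba).imp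
      hba.lt_of_le hba.symm.lt_of_le
  · rintro ⟨hcQ, hc⟩
    refine ⟨fun h => (hcQ h).2.elim (lt_irrefl a) (lt_irrefl a),
      Set.insert_subset ha fun b hb => (hcQ hb).1, hc.insert fun b hb _ => ?_⟩
    exact (hcQ hb).2.symm.imp le_of_lt le_of_lt

lemma ncard_orderComplex [Finite α] (ha : a ∈ Q) : (orderComplex Q).ncard =
    (orderComplex (Q \ {a})).ncard + (orderComplex {b ∈ Q | b < a ∨ a < b}).ncard := by
  classical
  rw [← Set.ncard_inter_add_ncard_sdiff_eq_ncard (orderComplex Q) {c | a ∉ c},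
    ← deletion_orderComplex, ← link_orderComplex ha]
  congr 1
  · congr 1
    ext c
    exact and_comm
  · refine (Set.ncard_congr (fun c _ => insert a c) ?_ ?_ ?_).symm
    · exact fun c hc => ⟨hc.2, fun h => h (Finset.mem_insert_self a c)⟩
    · exact fun c d hc hd h => by rw [← Finset.erase_insert hc.1, h, Finset.erase_insert hd.1]
    · intro c hc
      have hac : a ∈ c := not_not.1 hc.2
      exact ⟨c.erase a, ⟨Finset.notMem_erase a c, by simpa [hac] using hc.1⟩,
        Finset.insert_erase hac⟩

/-- The link of a maximal element has an even number of elements, so by induction it contains an odd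
number of chains: deleting a maximal element changes both parities. -/
lemma even_ncard_orderComplex_iff [Finite α] (Q : Set α)
    (hQ : ∀ s ∈ Q, Odd {r ∈ Q | r ≤ s}.ncard) :
    Even (orderComplex Q).ncard ↔ Odd Q.ncard := by
  induction h : Q.ncard using Nat.strong_induction_on generalizing Q with
  | _ n ih =>
    subst h
    rcases Q.eq_empty_or_nonempty with rfl | hne
    · simp [orderComplex_empty]
    obtain ⟨m, hm⟩ := Q.toFinite.exists_maximal hne
    have hlink : {b ∈ Q | b < m ∨ m < b} = {b ∈ Q | b ≤ m} \ {m} := by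
      ext b
      simp only [Set.mem_ofPred_eq, Set.mem_sdiff, Set.mem_singleton_iff, and_assoc]
      refine and_congr_right fun hb => ?_
      rw [or_iff_left (hm.not_gt hb), lt_iff_le_and_ne]
    have hdel_card : (Q \ {m}).ncard + 1 = Q.ncard := Set.ncard_sdiff_singleton_add_one hm.1
    have hlink_card : ({b ∈ Q | b ≤ m} \ {m}).ncard + 1 = {b ∈ Q | b ≤ m}.ncard :=
      Set.ncard_sdiff_singleton_add_one ⟨hm.1, le_rfl⟩
    have hle : {b ∈ Q | b ≤ m}.ncard ≤ Q.ncard := Set.ncard_le_ncard fun b hb => hb.1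
    have hbelow : ∀ s ∈ Q, s ≠ m → ¬ m ≤ s := fun s hs hsm h => hsm (hm.eq_of_ge hs h)
    have hdel_odd := ih _ (by omega) (Q \ {m}) (fun s hs => by
      convert hQ s hs.1 using 2
      ext r
      simp only [Set.mem_ofPred_eq, Set.mem_sdiff, Set.mem_singleton_iff]
      have := hbelow s hs.1 hs.2
      grind) rfl
    have hlink_odd := ih _ (by omega) ({b ∈ Q | b ≤ m} \ {m}) (fun s hs => by
      convert hQ s hs.1.1 using 2
      ext r
      simp only [Set.mem_ofPred_eq, Set.mem_sdiff, Set.mem_singleton_iff]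
      have := hbelow s hs.1.1 hs.2
      have := hs.1.2
      grind [le_trans]) rfl
    have hm_odd := hQ m hm.1
    rw [ncard_orderComplex hm.1, hlink]
    grind

variable [Fintype α] [DecidableEq α]

lemma acyclic_orderComplex_of_comparable (ha : a ∈ Q) (hcomp : ∀ b ∈ Q, b ≤ a ∨ a ≤ b) :
    Acyclic (orderComplex Q) := by
  refine acyclic_of_cone a fun c hc => ?_
  rw [mem_orderComplex, Finset.coe_insert]
  exact ⟨Set.insert_subset ha hc.1, hc.2.insert fun b hb _ => (hcomp b (hc.1 hb)).symm⟩

lemma acyclic_orderComplex_of_link (hlink : Acyclic (orderComplex {b ∈ Q | b < a ∨ a < b}))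
    (hdel : Acyclic (orderComplex (Q \ {a}))) : Acyclic (orderComplex Q) := by
  by_cases ha : a ∈ Q
  · refine acyclic_of_link_of_deletion (isLowerSet_orderComplex Q) a ?_ ?_
    · rwa [link_orderComplex ha]
    · rwa [deletion_orderComplex]
  · rwa [Set.sdiff_singleton_eq_self ha] at hdel

end OrderComplex

section PosetAction

open scoped Pointwise
open MulAction

variable {α G : Type*} [Group G] [MulAction G α] {P : Subgroup G} {g : G} {Q : Set α}

lemma smul_mem_fixedPoints_iff (hg : g ∈ Subgroup.normalizer (P : Set G)) (x : α) :
    g • x ∈ fixedPoints P α ↔ x ∈ fixedPoints P α := by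
  have hfix : ∀ {g : G}, g ∈ Subgroup.normalizer (P : Set G) → ∀ {x : α}, x ∈ fixedPoints P α →
      g • x ∈ fixedPoints P α := by
    intro g hg x hx p
    have hconj : g⁻¹ * p * g ∈ P := (Subgroup.mem_normalizer_iff''.1 hg p).1 p.2
    have hxg : (g⁻¹ * p * g) • x = x := hx ⟨_, hconj⟩
    calc (p : G) • g • x = g • (g⁻¹ * p * g) • x := by simp [smul_smul, mul_assoc]
      _ = g • x := by rw [hxg]
  exact ⟨fun h => by simpa using hfix (inv_mem hg) h, hfix hg⟩

variable [PartialOrder α]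

lemma smul_mem_orderComplex_iff [DecidableEq α] (hmono : ∀ g : G, Monotone (g • · : α → α))
    (hgQ : ∀ x, g • x ∈ Q ↔ x ∈ Q) (c : Finset α) :
    g • c ∈ orderComplex Q ↔ c ∈ orderComplex Q := by
  have hle : ∀ x y : α, g • x ≤ g • y ↔ x ≤ y := fun x y =>
    ⟨fun h => by simpa using hmono g⁻¹ h, fun h => hmono g h⟩
  have hchain : IsChain (· ≤ ·) (g • (c : Set α)) ↔ IsChain (· ≤ ·) (c : Set α) :=
    IsChain.image_relEmbedding_iff (φ := ⟨(MulAction.toPerm g).toEmbedding, hle _ _⟩)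
  rw [mem_orderComplex, mem_orderComplex, Finset.coe_smul_finset, hchain, Set.smul_set_subset_iff]
  exact and_congr_left' (forall₂_congr fun x _ => hgQ x)

variable [Finite α]

lemma smul_eq_self_of_isChain [DecidableEq α] (hg : Monotone (g • · : α → α)) {c : Finset α}
    (hc : IsChain (· ≤ ·) (c : Set α)) (hgc : g • c = c) {x : α} (hx : x ∈ c) : g • x = x := by
  obtain ⟨n, hn, hper⟩ := (MulAction.injective g).mem_periodicPts x
  have hgx : g • x ∈ c := hgc ▸ Finset.smul_mem_smul_finset hx
  rcases hc.total hx hgx with h | h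
  · refine (h.antisymm ?_).symm
    simpa [hper.eq] using hg.monotone_iterate_of_le_map h (Nat.one_le_iff_ne_zero.2 hn.ne')
  · refine h.antisymm ?_
    simpa [hper.eq] using hg.antitone_iterate_of_map_le h (Nat.one_le_iff_ne_zero.2 hn.ne')

lemma invariant_orderComplex [DecidableEq α] (hg : Monotone (g • · : α → α)) :
    {c ∈ orderComplex Q | g • c = c} = orderComplex {x ∈ Q | g • x = x} := by
  ext c
  constructor
  · rintro ⟨⟨hcQ, hc⟩, hgc⟩
    exact ⟨fun x hx => ⟨hcQ hx, smul_eq_self_of_isChain hg hc hgc hx⟩, hc⟩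
  · rintro ⟨hcQ, hc⟩
    refine ⟨⟨fun x hx => (hcQ hx).1, hc⟩, ?_⟩
    rw [Finset.smul_finset_def, Finset.image_congr fun x hx => (hcQ hx).2, Finset.image_id']

end PosetAction

section TwoGroup

open scoped Pointwise
open MulAction

variable {α G : Type*} [PartialOrder α] [Fintype α] [DecidableEq α] [Group G]
  [MulAction G α] {Q : Set α}

lemma Acyclic.orderComplex_of_index_two (hmono : ∀ g : G, Monotone (g • · : α → α))
    (hQ : ∀ (g : G) x, g • x ∈ Q ↔ x ∈ Q) {N : Subgroup G} (hN : N.index = 2)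
    (h : Acyclic (orderComplex (Q ∩ fixedPoints N α))) :
    Acyclic (orderComplex (Q ∩ fixedPoints G α)) := by
  have := Subgroup.normal_of_index_eq_two hN
  obtain ⟨g, hg⟩ : ∃ g, g ∉ N := by
    by_contra! hall
    simp [(Subgroup.eq_top_iff' N).2 hall] at hN
  have hfix : ∀ x, g • x ∈ Q ∩ fixedPoints N α ↔ x ∈ Q ∩ fixedPoints N α := fun x =>
    and_congr (hQ g x) (smul_mem_fixedPoints_iff (by simp [Subgroup.normalizer_eq_top]) x)
  have hsplit : {x ∈ Q ∩ fixedPoints N α | g • x = x} = Q ∩ fixedPoints G α := by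
    ext x
    constructor
    · rintro ⟨⟨hxQ, hxN⟩, hxg⟩
      refine ⟨hxQ, fun k => ?_⟩
      by_cases hk : k ∈ N
      · exact hxN ⟨k, hk⟩
      · have hkg : k * g⁻¹ ∈ N := by simp [Subgroup.mul_mem_iff_of_index_two hN, hk, hg]
        rw [← inv_mul_cancel_right k g, mul_smul, hxg]
        exact hxN ⟨_, hkg⟩
    · exact fun ⟨hxQ, hx⟩ => ⟨⟨hxQ, fun n => hx n⟩, hx g⟩
  rw [← hsplit, ← invariant_orderComplex (hmono g)]
  refine h.invariant_of_involution (isLowerSet_orderComplex _) ?_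
    (smul_mem_orderComplex_iff hmono hfix) fun c hc => ?_
  · rw [invariant_orderComplex (hmono g)]
    exact isLowerSet_orderComplex _
  · have hgg : ∀ x ∈ c, (g * g) • x = x := fun x hx =>
      (hc.1 hx).2 ⟨_, Subgroup.mul_self_mem_of_index_two hN g⟩
    rw [smul_smul, Finset.smul_finset_def, Finset.image_congr hgg, Finset.image_id']

/-- **Smith's theorem** for the order complex of a poset acted on by a finite 2-group. -/
theorem Acyclic.orderComplex_fixedPoints [Finite G] (hG : IsPGroup 2 G)
    (hmono : ∀ g : G, Monotone (g • · : α → α)) (hQ : ∀ (g : G) x, g • x ∈ Q ↔ x ∈ Q)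
    (h : Acyclic (orderComplex Q)) : Acyclic (orderComplex (Q ∩ fixedPoints G α)) := by
  obtain ⟨k, hk⟩ := hG.exists_card_eq
  induction k generalizing G with
  | zero =>
    have := (Nat.card_eq_one_iff_unique.1 (hk.trans (pow_zero 2))).1
    convert h
    exact Set.inter_eq_left.2 fun x _ g => by rw [Subsingleton.elim g 1, one_smul]
  | succ k ih =>
    obtain ⟨N, hNk⟩ := Sylow.exists_subgroup_card_pow_prime 2 (G := G) (n := k)
      (hk ▸ pow_dvd_pow 2 k.le_succ)
    have hN : N.index = 2 := by
      have := N.card_mul_index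
      rw [hNk, hk, pow_succ] at this
      exact Nat.eq_of_mul_eq_mul_left (by positivity) this
    exact Acyclic.orderComplex_of_index_two hmono hQ hN
      (ih (hG.to_subgroup N) (fun n => hmono n) (fun n => hQ n) hNk)

/-- Combination of Smith's theorem for `P`, the Lefschetz theorem for `γ` and the parity of the
number of chains. -/
theorem Acyclic.odd_ncard_fixedPoints {P : Subgroup G} [Finite P] (hP : IsPGroup 2 P) {γ : G}
    (hγ : γ ∈ Subgroup.normalizer (P : Set G)) (hmono : ∀ g : G, Monotone (g • · : α → α))
    (hPQ : ∀ g ∈ P, ∀ x, g • x ∈ Q ↔ x ∈ Q) (hγQ : ∀ x, γ • x ∈ Q ↔ x ∈ Q)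
    (hodd : ∀ s ∈ {x ∈ Q ∩ fixedPoints P α | γ • x = x},
      Odd {r ∈ {x ∈ Q ∩ fixedPoints P α | γ • x = x} | r ≤ s}.ncard)
    (h : Acyclic (orderComplex Q)) : Odd {x ∈ Q ∩ fixedPoints P α | γ • x = x}.ncard := by
  have hPfix : Acyclic (orderComplex (Q ∩ fixedPoints P α)) :=
    h.orderComplex_fixedPoints hP (fun g => hmono g) fun g => hPQ g g.2
  rw [← even_ncard_orderComplex_iff _ hodd, ← invariant_orderComplex (hmono γ)]
  exact hPfix.even_card_invariant (isLowerSet_orderComplex _) (smul_mem_orderComplex_iff hmono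
    fun x => and_congr (hγQ x) (smul_mem_fixedPoints_iff hγ x))

end TwoGroup

section DecisionTrees

/-- The elements of `A`, attached to `Q` from the top down, have conical links: below `s` in `Q`
there is the greatest element `φ s`. -/
lemma Acyclic.orderComplex_union {α : Type*} [PartialOrder α] [Fintype α] [DecidableEq α]
    {Q : Set α} (h : Acyclic (orderComplex Q)) (A : Finset α) (φ : α → α) (hφQ : ∀ s ∈ A, φ s ∈ Q)
    (hφ_lt : ∀ s ∈ A, φ s < s) (hφ : ∀ s ∈ A, ∀ b ∈ Q, b < s → b ≤ φ s) :
    Acyclic (orderComplex (Q ∪ A)) := by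
  induction A using Finset.strongInduction with
  | H A ih =>
    rcases A.eq_empty_or_nonempty with rfl | hne
    · simpa using h
    obtain ⟨a, ha⟩ := A.exists_minimal hne
    have hA : (A : Set α) = insert a ((A.erase a : Finset α) : Set α) := by
      rw [← Finset.coe_insert, Finset.insert_erase ha.1]
    have herase : Acyclic (orderComplex (Q ∪ (A.erase a : Finset α))) :=
      ih _ (Finset.erase_ssubset ha.1) (fun s hs => hφQ s (Finset.mem_of_mem_erase hs))
        (fun s hs => hφ_lt s (Finset.mem_of_mem_erase hs))
        (fun s hs => hφ s (Finset.mem_of_mem_erase hs))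
    by_cases haQ : a ∈ Q
    · rwa [hA, Set.union_insert, Set.insert_eq_of_mem (Set.mem_union_left _ haQ)]
    refine acyclic_orderComplex_of_link (a := a) ?_ ?_
    · refine acyclic_orderComplex_of_comparable (a := φ a)
        ⟨Or.inl (hφQ a ha.1), Or.inl (hφ_lt a ha.1)⟩ ?_
      rintro b ⟨hb | hb, hba | hab⟩
      · exact Or.inl (hφ a ha.1 b hb hba)
      · exact Or.inr ((hφ_lt a ha.1).trans hab).le
      · exact absurd hba (ha.not_lt hb)
      · exact Or.inr ((hφ_lt a ha.1).trans hab).le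
    · rwa [hA, Set.union_insert, Set.insert_sdiff_of_mem _ (Set.mem_singleton a),
        Set.sdiff_singleton_eq_self (by simp [haQ])]

lemma even_ncard_Icc_inter_iff {α : Type*} [PartialOrder α] [Finite α] {Q : Set α} {a b : α}
    (ha : a ∈ Q) (hab : a ≤ b) : Even (Set.Icc a b ∩ Q).ncard ↔ Odd (Set.Ioc a b ∩ Q).ncard := by
  rw [← Set.Ioc_insert_left hab, Set.insert_inter_of_mem ha,
    Set.ncard_insert_of_notMem (fun h => h.1.1.false), Nat.even_add_one, Nat.not_even_iff_odd]

variable {X : Type} [DecidableEq X] {𝓕 : Set (Finset X)} {B E : Finset X}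

lemma acyclic_Ioc_inter_of_insert_of_erase [Fintype X] (h𝓕 : IsLowerSet 𝓕) {i : X} (hiB : i ∉ B)
    (hdel : Acyclic (orderComplex (Set.Ioc B (E.erase i) ∩ 𝓕)))
    (hins : insert i B ∈ 𝓕 → Acyclic (orderComplex (Set.Ioc (insert i B) E ∩ 𝓕))) :
    Acyclic (orderComplex (Set.Ioc B E ∩ 𝓕)) := by
  classical
  let A : Finset (Finset X) := {s | s ∈ Set.Ioc B E ∩ 𝓕 ∧ i ∈ s ∧ s ≠ insert i B}
  have hA : ∀ s, s ∈ A ↔ (s ∈ Set.Ioc B E ∩ 𝓕 ∧ i ∈ s ∧ s ≠ insert i B) := by simp [A]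
  have herase : ∀ s ∈ A, B < s.erase i := fun s hs => by
    obtain ⟨⟨⟨hBs, -⟩, -⟩, his, hne⟩ := (hA s).1 hs
    refine (Finset.subset_erase.2 ⟨hBs.le, hiB⟩).lt_of_ne fun h => hne ?_
    rw [h, Finset.insert_erase his]
  have hunion : (Set.Ioc B E ∩ 𝓕) \ {insert i B} = (Set.Ioc B (E.erase i) ∩ 𝓕) ∪ A := by
    ext s
    have hne : i ∉ s → s ≠ insert i B := fun his h => his (h ▸ Finset.mem_insert_self i B)
    simp only [Set.mem_sdiff, Set.mem_union, Set.mem_inter_iff, Set.mem_Ioc, Set.mem_singleton_iff,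
      Finset.mem_coe, hA, Finset.subset_erase]
    tauto
  have hdel' : Acyclic (orderComplex ((Set.Ioc B E ∩ 𝓕) \ {insert i B})) := by
    rw [hunion]
    refine hdel.orderComplex_union A (Finset.erase · i) (fun s hs => ?_)
      (fun s hs => Finset.erase_ssubset ((hA s).1 hs).2.1) fun s _ b hb hbs =>
        Finset.subset_erase.2 ⟨hbs.le, fun hib => Finset.notMem_erase i E (hb.1.2 hib)⟩
    have hsE := ((hA s).1 hs).1
    exact ⟨⟨herase s hs, Finset.erase_subset_erase i hsE.1.2⟩, h𝓕 (Finset.erase_subset i s) hsE.2⟩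
  by_cases hins𝓕 : insert i B ∈ 𝓕
  · refine acyclic_orderComplex_of_link (a := insert i B) ?_ hdel'
    convert hins hins𝓕 using 2
    ext s
    have hcov : B < s → ¬ s < insert i B := fun h => (Finset.covBy_insert hiB).2 h
    have hlt : insert i B < s → B < s := (Finset.ssubset_insert hiB).trans
    simp only [Set.mem_ofPred_eq, Set.mem_inter_iff, Set.mem_Ioc]
    tauto
  · rwa [Set.sdiff_singleton_eq_self fun h => hins𝓕 h.2] at hdel'

/-- The **Kahn–Saks–Sturtevant** theorem for the link of `B` in `𝓕`, cut down to `E`; its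
barycentric subdivision is the order complex below. -/
theorem acyclic_of_depth_lt [Fintype X] (h𝓕 : IsLowerSet 𝓕) (T : DecisionTree X) (hB : B ∈ 𝓕)
    (hBE : B ⊆ E)
    (hT : ∀ s ∈ Set.Icc B E, T.eval (fun i => decide (i ∈ s)) = true ↔ s ∈ 𝓕)
    (hdepth : T.depth < (E \ B).card) : Acyclic (orderComplex (Set.Ioc B E ∩ 𝓕)) := by
  induction T generalizing B E with
  | leaf b =>
    have hE : E ∈ 𝓕 := (hT E ⟨hBE, le_rfl⟩).1 ((hT B ⟨le_rfl, hBE⟩).2 hB)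
    have hlt : B ⊂ E := hBE.ssubset_of_ne fun h => by simp [h] at hdepth
    exact acyclic_orderComplex_of_comparable (a := E) ⟨⟨hlt, le_rfl⟩, hE⟩ fun s hs => Or.inl hs.1.2
  | node i t f iht ihf =>
    rw [DecisionTree.depth] at hdepth
    have hmax := le_max_left t.depth f.depth
    have hmax' := le_max_right t.depth f.depth
    have ht : ∀ s ∈ Set.Icc B E, i ∈ s → (t.eval (fun i => decide (i ∈ s)) = true ↔ s ∈ 𝓕) :=
      fun s hs his => by simpa [DecisionTree.eval, his] using hT s hs
    have hf : ∀ s ∈ Set.Icc B E, i ∉ s → (f.eval (fun i => decide (i ∈ s)) = true ↔ s ∈ 𝓕) :=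
      fun s hs his => by simpa [DecisionTree.eval, his] using hT s hs
    by_cases hiB : i ∈ B
    · exact iht hB hBE (fun s hs => ht s hs (hs.1 hiB)) (by omega)
    by_cases hiE : i ∈ E
    · have hmem : i ∈ E \ B := Finset.mem_sdiff.2 ⟨hiE, hiB⟩
      have hcard_ins : (E \ insert i B).card + 1 = (E \ B).card := by
        rw [Finset.sdiff_insert, Finset.card_erase_add_one hmem]
      have hcard_del : (E.erase i \ B).card + 1 = (E \ B).card := by
        rw [Finset.erase_sdiff_comm, Finset.card_erase_add_one hmem]
      refine acyclic_Ioc_inter_of_insert_of_erase h𝓕 hiB ?_ fun hins => ?_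
      · exact ihf hB (Finset.subset_erase.2 ⟨hBE, hiB⟩)
          (fun s hs => hf s ⟨hs.1, hs.2.trans (Finset.erase_subset i E)⟩
            fun his => Finset.notMem_erase i E (hs.2 his)) (by omega)
      · exact iht hins (Finset.insert_subset hiE hBE)
          (fun s hs => ht s ⟨(Finset.subset_insert i B).trans hs.1, hs.2⟩
            (hs.1 (Finset.mem_insert_self i B))) (by omega)
    · exact ihf hB hBE (fun s hs => hf s hs fun his => hiE (hs.2 his)) (by omega)

section Group

open scoped Pointwise
open MulAction

lemma smul_mem_Ioc_iff {X G : Type*} [DecidableEq X] [Group G] [MulAction G X]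
    {B E : Finset X} {g : G} (hB : g • B = B) (hE : g • E = E) (s : Finset X) :
    g • s ∈ Set.Ioc B E ↔ s ∈ Set.Ioc B E := by
  have hsmul : ∀ r t : Finset X, g • r ≤ g • t ↔ r ≤ t := fun r t =>
    Finset.smul_finset_subset_smul_finset_iff
  have hBs : B ≤ g • s ↔ B ≤ s := by rw [← hsmul B s, hB]
  have hsB : g • s ≤ B ↔ s ≤ B := by rw [← hsmul s B, hB]
  have hsE : g • s ≤ E ↔ s ≤ E := by rw [← hsmul s E, hE]
  rw [Set.mem_Ioc, Set.mem_Ioc, lt_iff_le_not_ge, lt_iff_le_not_ge, hBs, hsB, hsE]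

lemma even_ncard_Icc_inter {Q : Set (Finset X)} (hBE : B < E) (hQ : ∀ r ∈ Q, B ∪ E \ r ∈ Q) :
    Even (Set.Icc B E ∩ Q).ncard := by
  classical
  obtain ⟨x, hxE, hxB⟩ := Finset.exists_of_ssubset hBE
  rw [← ZMod.natCast_eq_zero_iff_even, Set.ncard_eq_toFinset_card', Finset.cast_card]
  refine Finset.sum_involution (fun r _ => B ∪ E \ r) (fun _ _ => CharTwo.add_self_eq_zero _)
    (fun r _ _ h => ?_) (fun r hr => ?_) fun r hr => ?_
  · have : x ∈ B ∪ E \ r ↔ x ∈ r := by rw [h]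
    simp [hxE, hxB] at this
  · exact Set.mem_toFinset.2 ⟨⟨Finset.subset_union_left,
      Finset.union_subset hBE.le Finset.sdiff_subset⟩, hQ r (Set.mem_toFinset.1 hr).2⟩
  · have hr := (Set.mem_toFinset.1 hr).1
    ext y
    have hBr : y ∈ B → y ∈ r := fun hy => hr.1 hy
    have hrE : y ∈ r → y ∈ E := fun hy => hr.2 hy
    grind

variable {G : Type*} [Group G] [MulAction G X]

/-- The parity hypothesis of `Acyclic.odd_ncard_fixedPoints` holds since `r ↦ B ∪ (s \ r)` is a
fixed-point-free involution of the invariant sets between `B` and `s`. -/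
theorem even_ncard_invariant_of_depth_lt [Finite X] {P : Subgroup G} [Finite P]
    (hP : IsPGroup 2 P) {γ : G} (hγ : γ ∈ Subgroup.normalizer (P : Set G)) (h𝓕 : IsLowerSet 𝓕)
    (hG𝓕 : ∀ (g : G) s, g • s ∈ 𝓕 ↔ s ∈ 𝓕) (hB : B ∈ fixedPoints P (Finset X) ∩ fixedBy _ γ)
    (hE : E ∈ fixedPoints P (Finset X) ∩ fixedBy _ γ) (T : DecisionTree X) (hBE : B ⊆ E)
    (hT : ∀ s ∈ Set.Icc B E, T.eval (fun i => decide (i ∈ s)) = true ↔ s ∈ 𝓕)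
    (hdepth : T.depth < (E \ B).card) :
    Even (Set.Icc B E ∩ (𝓕 ∩ (fixedPoints P (Finset X) ∩ fixedBy _ γ))).ncard := by
  have := Fintype.ofFinite X
  set 𝓘 := fixedPoints P (Finset X) ∩ fixedBy _ γ
  by_cases hB𝓕 : B ∈ 𝓕
  swap
  · have hempty : Set.Icc B E ∩ (𝓕 ∩ 𝓘) = ∅ :=
      Set.eq_empty_of_forall_notMem fun s hs => hB𝓕 (h𝓕 hs.1.1 hs.2.1)
    simp [hempty]
  have hcompl : ∀ s ∈ 𝓘, ∀ r ∈ 𝓘, B ∪ s \ r ∈ 𝓘 := fun s hs r hr => by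
    have h : ∀ g : G, g • B = B → g • s = s → g • r = r → g • (B ∪ s \ r) = B ∪ s \ r :=
      fun g hgB hgs hgr => by rw [Finset.smul_finset_union, Finset.smul_finset_sdiff, hgB, hgs, hgr]
    exact ⟨fun g => h g (hB.1 g) (hs.1 g) (hr.1 g), h γ hB.2 hs.2 hr.2⟩
  have hfix : {x ∈ Set.Ioc B E ∩ 𝓕 ∩ fixedPoints P _ | γ • x = x} = Set.Ioc B E ∩ (𝓕 ∩ 𝓘) := by
    simp only [𝓘, ← Set.inter_assoc]
    rfl
  rw [even_ncard_Icc_inter_iff (Q := 𝓕 ∩ 𝓘) ⟨hB𝓕, hB⟩ hBE, ← hfix]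
  refine (acyclic_of_depth_lt h𝓕 T hB𝓕 hBE hT hdepth).odd_ncard_fixedPoints hP hγ
    (fun g _ _ => Finset.smul_finset_subset_smul_finset)
    (fun g hg s => and_congr (smul_mem_Ioc_iff (hB.1 ⟨g, hg⟩) (hE.1 ⟨g, hg⟩) s) (hG𝓕 g s))
    (fun s => and_congr (smul_mem_Ioc_iff hB.2 hE.2 s) (hG𝓕 γ s)) fun s hs => ?_
  rw [hfix] at hs ⊢
  have hbelow : {r | r ∈ Set.Ioc B E ∩ (𝓕 ∩ 𝓘) ∧ r ≤ s} = Set.Ioc B s ∩ 𝓘 :=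
    Set.ext fun r => ⟨fun ⟨⟨hr, _, hr𝓘⟩, hrs⟩ => ⟨⟨hr.1, hrs⟩, hr𝓘⟩,
      fun ⟨hr, hr𝓘⟩ => ⟨⟨⟨hr.1, hr.2.trans hs.1.2⟩, h𝓕 hr.2 hs.2.1, hr𝓘⟩, hr.2⟩⟩
  rw [hbelow, ← even_ncard_Icc_inter_iff hB hs.1.1.le]
  exact even_ncard_Icc_inter hs.1.1 (hcompl s hs.2.2)

end Group

end DecisionTrees

section BinaryTree

variable {j : ℕ}

/-- The leaves `x` and `y` of the binary tree of depth `j` lie below the same vertex at height `n`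
from the root. -/
def Agree (n : ℕ) (x y : Fin j → ZMod 2) : Prop := ∀ m : Fin j, m.val < n → x m = y m

lemma Agree.symm {n : ℕ} {x y : Fin j → ZMod 2} (h : Agree n x y) : Agree n y x :=
  fun m hm => (h m hm).symm

lemma Agree.trans {n : ℕ} {x y z : Fin j → ZMod 2} (h : Agree n x y) (h' : Agree n y z) :
    Agree n x z := fun m hm => (h m hm).trans (h' m hm)

lemma agree_succ_iff {i : Fin j} {x y : Fin j → ZMod 2} :
    Agree (i + 1) x y ↔ Agree i x y ∧ x i = y i := by
  refine ⟨fun h => ⟨fun m hm => h m (hm.trans i.val.lt_succ_self), h i i.val.lt_succ_self⟩,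
    fun ⟨h, hi⟩ m hm => ?_⟩
  rcases (Nat.lt_succ_iff.1 hm).lt_or_eq with hmi | hmi
  · exact h m hmi
  · rwa [Fin.ext hmi]

/-- The leaves `x` and `y` of the binary tree branch at height `i`. -/
def FirstDiff (i : Fin j) (x y : Fin j → ZMod 2) : Prop := Agree i x y ∧ x i ≠ y i

lemma FirstDiff.symm {i : Fin j} {x y : Fin j → ZMod 2} (h : FirstDiff i x y) : FirstDiff i y x :=
  ⟨h.1.symm, h.2.symm⟩

lemma FirstDiff.unique {i i' : Fin j} {x y : Fin j → ZMod 2} (h : FirstDiff i x y)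
    (h' : FirstDiff i' x y) : i = i' := by
  rcases lt_trichotomy i i' with hlt | heq | hlt
  · exact absurd (h'.1 i hlt) h.2
  · exact heq
  · exact absurd (h.1 i' hlt) h'.2

lemma exists_firstDiff {x y : Fin j → ZMod 2} (h : x ≠ y) : ∃ i, FirstDiff i x y := by
  obtain ⟨i, hi, hmin⟩ := WellFounded.has_min (α := Fin j) wellFounded_lt {m | x m ≠ y m}
    (Function.ne_iff.1 h)
  exact ⟨i, fun m hm => not_not.1 fun hne => hmin m hne hm, hi⟩

variable (j) in
/-- The automorphism group of the rooted binary tree of depth `j`, as a group of permutations of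
the leaves. -/
def treeAut : Subgroup (Equiv.Perm (Fin j → ZMod 2)) where
  carrier := {τ | ∀ n x y, Agree n (τ x) (τ y) ↔ Agree n x y}
  mul_mem' {σ τ} hσ hτ n x y := (hσ n (τ x) (τ y)).trans (hτ n x y)
  one_mem' _ _ _ := Iff.rfl
  inv_mem' {τ} hτ n x y := by
    rw [← hτ]
    simp

lemma firstDiff_treeAut_iff {τ : Equiv.Perm (Fin j → ZMod 2)} (hτ : τ ∈ treeAut j) {i : Fin j}
    {x y : Fin j → ZMod 2} : FirstDiff i (τ x) (τ y) ↔ FirstDiff i x y := by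
  have hdiff : ∀ x y : Fin j → ZMod 2, FirstDiff i x y ↔ Agree i x y ∧ ¬ Agree (i + 1) x y :=
    fun x y => by rw [agree_succ_iff, FirstDiff, not_and, and_congr_right_iff]; tauto
  rw [hdiff, hdiff, hτ, hτ]

lemma agree_pow_two_pow {τ : Equiv.Perm (Fin j → ZMod 2)} (hτ : τ ∈ treeAut j) {i : ℕ}
    (hi : i ≤ j) (x : Fin j → ZMod 2) : Agree i ((τ ^ 2 ^ i) x) x := by
  induction i generalizing x with
  | zero => exact fun m hm => absurd hm m.val.not_lt_zero
  | succ i ih =>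
    have hσ : τ ^ 2 ^ i ∈ treeAut j := pow_mem hτ _
    have hagree := ih (by omega)
    rw [pow_succ, pow_mul, pow_two, Equiv.Perm.mul_apply]
    generalize τ ^ 2 ^ i = σ at hσ hagree ⊢
    have hsucc := hσ (i + 1) (σ x) x
    rw [agree_succ_iff (i := ⟨i, hi⟩), agree_succ_iff (i := ⟨i, hi⟩)] at hsucc
    simp only [hagree, true_and] at hsucc
    have hZMod : ∀ a b c : ZMod 2, (a = b ↔ b = c) → a = c := by decide
    exact agree_succ_iff (i := ⟨i, hi⟩).2 ⟨(hagree _).trans (hagree _), hZMod _ _ _ hsucc⟩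

lemma isPGroup_treeAut : IsPGroup 2 (treeAut j) := fun ⟨_, hτ⟩ =>
  ⟨j, Subtype.ext <| Equiv.ext fun x => funext fun m => agree_pow_two_pow hτ le_rfl x m m.2⟩

/-- The witness is affine: the composition of a translation with the transvection along a vector
whose first `i + 1` coordinates vanish. -/
lemma exists_treeAut_of_firstDiff {i : Fin j} {x y x' y' : Fin j → ZMod 2} (h : FirstDiff i x y)
    (h' : FirstDiff i x' y') : ∃ τ ∈ treeAut j, τ x = x' ∧ τ y = y' := by
  let c := (y' - x') - (y - x)
  let f : (Fin j → ZMod 2) → Fin j → ZMod 2 := fun z => x' + (z - x) + (z i - x i) • c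
  have hZMod : ∀ a b : ZMod 2, a ≠ b → b - a = 1 := by decide
  have hc : ∀ m ≤ i, c m = 0 := by
    intro m hm
    rcases hm.lt_or_eq with hm | rfl
    · simp [c, h.1 m hm, h'.1 m hm]
    · simp [c, hZMod _ _ h.2, hZMod _ _ h'.2]
  have hf : ∀ z w m, f z m - f w m = (z m - w m) + (z i - w i) * c m := by
    intro z w m
    simp only [f, Pi.add_apply, Pi.sub_apply, Pi.smul_apply, smul_eq_mul]
    ring
  have hagree : ∀ n z w, Agree n (f z) (f w) ↔ Agree n z w := by
    intro n z w
    by_cases hin : i.val < n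
    · refine ⟨fun hfzw => ?_, fun hzw m hm => ?_⟩
      · have hi : z i = w i := by
          have := hf z w i
          rwa [hfzw i hin, sub_self, hc i le_rfl, mul_zero, add_zero, eq_comm, sub_eq_zero] at this
        intro m hm
        have := hf z w m
        rwa [hfzw m hm, hi, sub_self, sub_self, zero_mul, add_zero, eq_comm, sub_eq_zero] at this
      · rw [← sub_eq_zero, hf, hzw m hm, hzw i hin]
        simp
    · refine forall₂_congr fun m hm => ?_
      rw [← sub_eq_zero, hf, hc m (by omega), mul_zero, add_zero, sub_eq_zero]
  have hinj : Function.Injective f := fun z w hzw => funext fun m =>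
    (hagree j z w).1 (fun m _ => congrFun hzw m) m m.2
  refine ⟨Equiv.ofBijective f (Finite.injective_iff_bijective.1 hinj), hagree, ?_, ?_⟩
  · simp [f]
  · simp [f, hZMod _ _ h.2, c]

lemma exists_treeAut_apply_eq (x x' : Fin j → ZMod 2) : ∃ τ ∈ treeAut j, τ x = x' :=
  ⟨Equiv.addRight (x' - x), fun _ _ _ => forall₂_congr fun _ _ => add_left_inj _,
    add_sub_cancel x x'⟩

end BinaryTree

section LevelGraphs

open MulAction

lemma odd_ncard_iff_odd_ncard_fixedPoints {G Ω : Type*} [Group G] [MulAction G Ω] [Finite Ω]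
    (hG : IsPGroup 2 G) {S : Set Ω} (hS : ∀ (g : G), ∀ x ∈ S, g • x ∈ S) :
    Odd S.ncard ↔ Odd (S ∩ fixedPoints G Ω).ncard := by
  let S' : SubMulAction G Ω := ⟨S, fun g {x} => hS g x⟩
  have hfix : ((↑) : S' → Ω) '' fixedPoints G S' = S ∩ fixedPoints G Ω := by
    ext x
    exact ⟨fun ⟨y, hy, hyx⟩ => hyx ▸ ⟨y.2, fun g => congrArg Subtype.val (hy g)⟩,
      fun ⟨hxS, hx⟩ => ⟨⟨x, hxS⟩, fun g => Subtype.ext (hx g), rfl⟩⟩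
  have hmod : Nat.card S' ≡ Nat.card (fixedPoints G S') [MOD 2] := hG.card_modEq_card_fixedPoints S'
  rw [← hfix, Set.ncard_image_of_injective _ Subtype.val_injective, Nat.odd_iff, Nat.odd_iff]
  exact Eq.congr_left hmod

variable {j : ℕ} {L : Type*}

/-- The automorphisms of the binary tree act on the graphs on its leaves and `L` by relabelling. -/
instance treeAutMulAction : MulAction (treeAut j) (SimpleGraph ((Fin j → ZMod 2) ⊕ L)) where
  smul τ R := R.comap (Sum.map (τ⁻¹).1 id)
  one_smul R := by ext (x | p) (y | q) <;> exact Iff.rfl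
  mul_smul σ τ R := by
    change R.comap (Sum.map (σ * τ)⁻¹.1 id) = (R.comap _).comap _
    rw [mul_inv_rev]
    ext (x | p) (y | q) <;> exact Iff.rfl

lemma smul_graph_eq_comap (τ : treeAut j) (R : SimpleGraph ((Fin j → ZMod 2) ⊕ L)) :
    τ • R = R.comap (Sum.map (τ⁻¹).1 id) := rfl

lemma adj_of_mem_fixedPoints {R : SimpleGraph ((Fin j → ZMod 2) ⊕ L)}
    (hR : R ∈ fixedPoints (treeAut j) _) {τ : Equiv.Perm (Fin j → ZMod 2)} (hτ : τ ∈ treeAut j)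
    {u v : (Fin j → ZMod 2) ⊕ L} (h : R.Adj u v) : R.Adj (Sum.map τ id u) (Sum.map τ id v) := by
  rw [← hR ⟨τ, hτ⟩⁻¹, smul_graph_eq_comap, inv_inv] at h
  exact h

/-- The graph on the leaves of the binary tree and `L` in which two leaves are adjacent if they
branch at a height in `A`, every leaf is adjacent to the elements of `N`, and `L` is a clique. -/
def levelGraph (A : Set (Fin j)) (N : Set L) : SimpleGraph ((Fin j → ZMod 2) ⊕ L) where
  Adj
    | .inl x, .inl y => ∃ i ∈ A, FirstDiff i x y
    | .inl _, .inr p => p ∈ N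
    | .inr p, .inl _ => p ∈ N
    | .inr p, .inr q => p ≠ q
  symm.symm
    | .inl _, .inl _, ⟨i, hi, h⟩ => ⟨i, hi, h.symm⟩
    | .inl _, .inr _, h => h
    | .inr _, .inl _, h => h
    | .inr _, .inr _, h => h.symm
  loopless.irrefl
    | .inl _, ⟨_, _, h⟩ => h.2 rfl
    | .inr _, h => h rfl

lemma levelGraph_injective :
    Function.Injective fun q : Set (Fin j) × Set L => levelGraph q.1 q.2 := by
  rintro ⟨A, N⟩ ⟨A', N'⟩ h
  have hadj : ∀ u v, (levelGraph A N).Adj u v ↔ (levelGraph A' N').Adj u v := fun u v =>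
    iff_of_eq (congrArg (fun R : SimpleGraph _ => R.Adj u v) h)
  refine Prod.ext (Set.ext fun i => ?_) (Set.ext fun p => hadj (.inl 0) (.inr p))
  have hi : FirstDiff i (0 : Fin j → ZMod 2) (Pi.single i 1) :=
    ⟨fun m hm => by simp [Fin.ne_of_lt hm], by simp⟩
  have hmem : ∀ A : Set (Fin j), (∃ i' ∈ A, FirstDiff i' (0 : Fin j → ZMod 2) (Pi.single i 1)) ↔
      i ∈ A := fun A => ⟨fun ⟨i', hi', h⟩ => hi.unique h ▸ hi', fun h => ⟨i, h, hi⟩⟩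
  exact (hmem A).symm.trans ((hadj (.inl 0) (.inl _)).trans (hmem A'))

lemma range_levelGraph : Set.range (fun q : Set (Fin j) × Set L => levelGraph q.1 q.2) =
    {R | ∀ p q, p ≠ q → R.Adj (.inr p) (.inr q)} ∩ fixedPoints (treeAut j) _ := by
  refine Set.Subset.antisymm ?_ fun R ⟨hL, hR⟩ => ?_
  · rintro _ ⟨⟨A, N⟩, rfl⟩
    refine ⟨fun _ _ h => h, fun τ => ?_⟩
    ext (x | p) (y | q)
    · exact exists_congr fun i => and_congr_right fun _ => firstDiff_treeAut_iff (τ⁻¹).2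
    all_goals exact Iff.rfl
  have hleaf : ∀ x y p, R.Adj (.inl x) (.inr p) → R.Adj (.inl y) (.inr p) := fun x y p h => by
    obtain ⟨τ, hτ, rfl⟩ := exists_treeAut_apply_eq x y
    exact adj_of_mem_fixedPoints hR hτ h
  refine ⟨({i | ∃ x y, FirstDiff i x y ∧ R.Adj (.inl x) (.inl y)},
    {p | R.Adj (.inl 0) (.inr p)}), ?_⟩
  ext (x | p) (y | q)
  · constructor
    · rintro ⟨i, ⟨x', y', h', hadj⟩, h⟩
      obtain ⟨τ, hτ, rfl, rfl⟩ := exists_treeAut_of_firstDiff h' h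
      exact adj_of_mem_fixedPoints hR hτ hadj
    · intro hadj
      obtain ⟨i, hi⟩ := exists_firstDiff (ne_of_apply_ne Sum.inl hadj.ne)
      exact ⟨i, ⟨x, y, hi, hadj⟩, hi⟩
  · exact ⟨hleaf 0 x q, hleaf x 0 q⟩
  · exact ⟨fun h => (hleaf 0 y p h).symm, fun h => hleaf y 0 p h.symm⟩
  · exact ⟨hL p q, fun h => ne_of_apply_ne Sum.inr h.ne⟩

lemma nonempty_hom_levelGraph (A : Set (Fin j)) (N : Set L) :
    Nonempty ((⊤ : SimpleGraph ((A → ZMod 2) ⊕ N)) →g levelGraph A N) := by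
  classical
  let extend : (A → ZMod 2) → Fin j → ZMod 2 := fun f m => if hm : m ∈ A then f ⟨m, hm⟩ else 0
  refine ⟨⟨Sum.map extend Subtype.val, ?_⟩⟩
  rintro (f | p) (g | q) hne
  · have hfg : extend f ≠ extend g := fun h => hne <| congrArg Sum.inl <| funext fun m => by
      simpa [extend] using congrFun h m
    obtain ⟨i, hi⟩ := exists_firstDiff hfg
    refine ⟨i, not_not.1 fun hiA => hi.2 ?_, hi⟩
    simp [extend, hiA]
  · exact q.2
  · exact p.2
  · exact fun h => hne (congrArg Sum.inr (Subtype.ext h))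

variable [Fintype L]

lemma colorable_levelGraph {A : Set (Fin j)} {N : Set L}
    (h : 2 ^ A.ncard + N.ncard ≤ Fintype.card L) :
    (levelGraph A N).Colorable (Fintype.card L) := by
  classical
  obtain ⟨e⟩ : Nonempty ((A → ZMod 2) ↪ (Nᶜ : Set L)) := by
    refine Function.Embedding.nonempty_of_card_le ?_
    have hN := Set.ncard_add_ncard_compl N
    rw [← Nat.card_eq_fintype_card, ← Nat.card_eq_fintype_card, Nat.card_coe_set_eq, Nat.card_fun,
      Nat.card_zmod, Nat.card_coe_set_eq]
    rw [← Nat.card_eq_fintype_card] at h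
    omega
  let c : (Fin j → ZMod 2) ⊕ L → L := Sum.elim (fun x => e fun i => x i) id
  refine (SimpleGraph.Coloring.mk c ?_).colorable
  rintro (x | p) (y | q) hadj h
  · obtain ⟨i, hi, hxy⟩ := hadj
    exact hxy.2 (congrFun (e.injective (Subtype.ext h)) ⟨i, hi⟩)
  · exact (e fun i => x i).2 ((show (e fun i => x i : L) = q from h) ▸ hadj)
  · exact (e fun i => y i).2 ((show p = (e fun i => y i : L) from h) ▸ hadj)
  · exact hadj h

lemma isEmpty_hom_levelGraph_iff {V : Type*} {H : SimpleGraph V}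
    (hH : H.chromaticNumber = Fintype.card L + 1) {A : Set (Fin j)} {N : Set L} :
    IsEmpty (H →g levelGraph A N) ↔ 2 ^ A.ncard + N.ncard ≤ Fintype.card L := by
  classical
  have hcol : ∀ m, H.Colorable m ↔ Fintype.card L < m := fun m => by
    rw [← SimpleGraph.chromaticNumber_le_iff_colorable, hH]
    exact_mod_cast Nat.succ_le_iff
  refine ⟨fun h => ?_, fun h => ⟨fun φ => ?_⟩⟩
  · by_contra! hlt
    obtain ⟨φ⟩ := nonempty_hom_levelGraph A N
    refine h.false (φ.comp (((hcol _).2 hlt).toColoring (α := (A → ZMod 2) ⊕ N) ?_))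
    rw [← Nat.card_eq_fintype_card, Nat.card_sum, Nat.card_fun, Nat.card_zmod,
      Nat.card_coe_set_eq, Nat.card_coe_set_eq]
  · exact lt_irrefl _ ((hcol _).1 ((colorable_levelGraph h).of_hom φ))

lemma odd_ncard_add_ncard_le [Nonempty L] {a : ℕ} (hL : Fintype.card L < 2 ^ 2 ^ a) :
    Odd {q : Set (Fin (2 ^ a)) × Set L | 2 ^ q.1.ncard + q.2.ncard ≤ Fintype.card L}.ncard := by
  classical
  let f : ℕ → ℕ := fun i =>
    (Finset.univ.filter fun N : Finset L => 2 ^ i + N.card ≤ Fintype.card L).card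
  have hsum : {q : Set (Fin (2 ^ a)) × Set L | 2 ^ q.1.ncard + q.2.ncard ≤ Fintype.card L}.ncard =
      ∑ i ∈ Finset.range (2 ^ a + 1), (2 ^ a).choose i • f i := by
    have hpowerset := Finset.sum_powerset_apply_card (x := (Finset.univ : Finset (Fin (2 ^ a)))) f
    rw [Finset.card_univ, Fintype.card_fin, Finset.powerset_univ] at hpowerset
    let e := (Fintype.finsetEquivSet (α := Fin (2 ^ a))).prodCongr (Fintype.finsetEquivSet (α := L))
    rw [← hpowerset, ← Set.ncard_preimage_of_injective_subset_range e.injective (by simp)]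
    simp only [f, Finset.card_filter]
    rw [← Finset.sum_product', Finset.univ_product_univ, ← Finset.card_filter,
      ← Set.ncard_coe_finset]
    simp [e, Set.preimage]
  have hf_zero : f 0 = 2 ^ Fintype.card L - 1 := by
    have herase : (Finset.univ.filter fun N : Finset L => 2 ^ 0 + N.card ≤ Fintype.card L) =
        Finset.univ.erase Finset.univ := by
      ext N
      rw [Finset.mem_filter_univ, Finset.mem_erase, ← Finset.card_lt_iff_ne_univ, pow_zero,
        Nat.one_add_le_iff]
      simp
    rw [show f 0 = _ from congrArg Finset.card herase, Finset.card_erase_of_mem (Finset.mem_univ _),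
      Finset.card_univ, Fintype.card_finset]
  have hf_top : f (2 ^ a) = 0 := by
    refine Finset.card_eq_zero.2 (Finset.filter_eq_empty_iff.2 fun N _ => ?_)
    omega
  rw [hsum, Finset.sum_range_succ, hf_top, smul_zero, add_zero,
    Finset.sum_range_eq_add_Ico _ (by positivity), hf_zero, Nat.choose_zero_right, one_smul]
  refine Odd.add_even ?_ (Finset.even_sum _ fun i hi => Even.mul_right ?_ _)
  · exact Nat.Even.sub_odd Nat.one_le_two_pow (even_two.pow_of_ne_zero Fintype.card_ne_zero) odd_one
  · obtain ⟨hi, hi'⟩ := Finset.mem_Ico.1 hi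
    exact even_iff_two_dvd.2 (Nat.prime_two.dvd_choose_pow (by omega) (by omega))

theorem odd_ncard_isEmpty_hom [Nonempty L] {V : Type*} {H : SimpleGraph V}
    (hH : H.chromaticNumber = Fintype.card L + 1) {a : ℕ} (hL : Fintype.card L < 2 ^ 2 ^ a) :
    Odd {R : SimpleGraph ((Fin (2 ^ a) → ZMod 2) ⊕ L) |
      (∀ p q, p ≠ q → R.Adj (.inr p) (.inr q)) ∧ IsEmpty (H →g R)}.ncard := by
  rw [odd_ncard_iff_odd_ncard_fixedPoints (isPGroup_treeAut (j := 2 ^ a)) ?_]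
  swap
  · exact fun τ R hR => ⟨fun p q => hR.1 p q,
      ⟨fun φ => hR.2.false ((SimpleGraph.Hom.comap _ R).comp φ)⟩⟩
  have hlevel : {q : Set (Fin (2 ^ a)) × Set L | 2 ^ q.1.ncard + q.2.ncard ≤ Fintype.card L} =
      (fun q => levelGraph q.1 q.2) ⁻¹' {R | IsEmpty (H →g R)} :=
    Set.ext fun q => (isEmpty_hom_levelGraph_iff hH).symm
  have hodd := odd_ncard_add_ncard_le hL
  rw [← Set.ncard_image_of_injective _ levelGraph_injective, hlevel,
    Set.image_preimage_eq_range_inter, range_levelGraph] at hodd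
  rwa [Set.ofPred_and, Set.inter_right_comm]

end LevelGraphs

section BlowUps

open scoped SimpleGraph

variable {V U Q : Type*} {H : SimpleGraph V} {κ : U → Q}

lemma containsCopy_iff_isContained {V W : Type} {H : SimpleGraph V} {G : SimpleGraph W} :
    ContainsCopy H G ↔ H ⊑ G :=
  ⟨fun ⟨f, hf, h⟩ => ⟨⟨⟨f, h _ _⟩, hf⟩⟩, fun ⟨f⟩ => ⟨f, f.injective, fun _ _ => f.toHom.map_rel⟩⟩

lemma isContained_comap_iff (hκ : ∀ q, Nonempty (V ↪ κ ⁻¹' {q})) {R : SimpleGraph Q} :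
    H ⊑ R.comap κ ↔ Nonempty (H →g R) := by
  refine ⟨fun ⟨f⟩ => ⟨κ ∘ f, f.toHom.map_rel⟩, fun ⟨φ⟩ => ?_⟩
  let e q : V ↪ κ ⁻¹' {q} := (hκ q).some
  have he (q : Q) (v : V) : κ (e q v) = q := (e q v).2
  refine ⟨⟨⟨fun v => e (φ v) v, fun {v w} hvw => ?_⟩, fun v w hvw => ?_⟩⟩
  · rw [SimpleGraph.comap_adj, he, he]
    exact φ.map_rel hvw
  · have hφ : φ v = φ w := by rw [← he (φ v) v, ← he (φ w) w]; exact congrArg κ hvw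
    replace hvw : (e (φ v) v : U) = e (φ w) w := hvw
    rw [hφ] at hvw
    exact (e _).injective (Subtype.ext hvw)

lemma comap_injective (hκ : Function.Surjective κ) :
    Function.Injective (SimpleGraph.comap κ) := by
  intro R R' h
  ext p q
  obtain ⟨u, rfl⟩ := hκ p
  obtain ⟨v, rfl⟩ := hκ q
  exact iff_of_eq (congrArg (fun G : SimpleGraph U => G.Adj u v) h)

/-- An edge inside a part would, by homogeneity, make that part a clique containing `H`. -/
lemma exists_comap_eq [Nonempty V] (hκ : ∀ q, Nonempty (V ↪ κ ⁻¹' {q})) {G : SimpleGraph U}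
    (hHG : H.Free G) (hG : ∀ u v u' v', u ≠ v → u' ≠ v' → κ u = κ u' → κ v = κ v' →
      G.Adj u v → G.Adj u' v') : ∃ R : SimpleGraph Q, R.comap κ = G := by
  let σ q : U := (hκ q).some (Classical.arbitrary V)
  have hσ (q : Q) : κ (σ q) = q := ((hκ q).some (Classical.arbitrary V)).2
  refine ⟨G.comap σ, ?_⟩
  ext u v
  by_cases huv : κ u = κ v
  · refine iff_of_false (fun h => G.ne_of_adj h (congrArg σ huv)) fun h => hHG ?_
    obtain ⟨e⟩ := hκ (κ u)
    exact ⟨⟨⟨fun a => e a, fun {a b} hab => hG u v _ _ h.ne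
      (fun he => hab.ne (e.injective (Subtype.ext he))) (e a).2.symm
      (huv.symm.trans (e b).2.symm) h⟩, fun a b he => e.injective (Subtype.ext he)⟩⟩
  · have hne : σ (κ u) ≠ σ (κ v) := fun h => huv (by rw [← hσ (κ u), h, hσ])
    exact ⟨hG _ _ _ _ hne (ne_of_apply_ne κ huv) (hσ _) (hσ _),
      hG _ _ _ _ (ne_of_apply_ne κ huv) hne (hσ _).symm (hσ _).symm⟩

end BlowUps

section LabelledVertices

variable {V U B L : Type*} {H : SimpleGraph V}

/-- The complete multipartite graph on the vertices with labels in `L`, the parts being the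
fibres of `κ`; the other vertices are isolated. -/
def partGraph (κ : U → B ⊕ L) : SimpleGraph U where
  Adj u v := κ u ≠ κ v ∧ (κ u).isRight ∧ (κ v).isRight
  symm.symm _ _ h := ⟨h.1.symm, h.2.2, h.2.1⟩
  loopless.irrefl _ h := h.1 rfl

/-- The graph of all pairs of vertices at least one of which has its label in `B`. Its edges are
the pairs whose adjacency is left undetermined. -/
def liveGraph (κ : U → B ⊕ L) : SimpleGraph U where
  Adj u v := u ≠ v ∧ ((κ u).isLeft ∨ (κ v).isLeft)
  symm.symm _ _ h := ⟨h.1.symm, h.2.symm⟩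
  loopless.irrefl _ h := h.1 rfl

/-- A permutation group preserves the labelling `κ` and, on ordered pairs of distinct vertices the
first of which has its label in `B`, is transitive among those with the same labels. -/
structure IsPairTransitive (Γ : Subgroup (Equiv.Perm U)) (κ : U → B ⊕ L) : Prop where
  label_apply : ∀ g ∈ Γ, ∀ u, κ (g u) = κ u
  exists_apply_eq : ∀ u v u' v', u ≠ v → u' ≠ v' → κ u = κ u' → κ v = κ v' → (κ u).isLeft →
    ∃ g ∈ Γ, g u = u' ∧ g v = v'

variable {κ : U → B ⊕ L}

lemma IsPairTransitive.partGraph_adj {Γ : Subgroup (Equiv.Perm U)} (hΓ : IsPairTransitive Γ κ)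
    {g : Equiv.Perm U} (hg : g ∈ Γ) {u v : U} (h : (partGraph κ).Adj u v) :
    (partGraph κ).Adj (g u) (g v) := by
  simpa only [partGraph, hΓ.label_apply g hg] using h

lemma IsPairTransitive.liveGraph_adj {Γ : Subgroup (Equiv.Perm U)} (hΓ : IsPairTransitive Γ κ)
    {g : Equiv.Perm U} (hg : g ∈ Γ) {u v : U} (h : (liveGraph κ).Adj u v) :
    (liveGraph κ).Adj (g u) (g v) := by
  simpa only [liveGraph, hΓ.label_apply g hg, ne_eq, EmbeddingLike.apply_eq_iff_eq] using h

lemma disjoint_partGraph_liveGraph : Disjoint (partGraph κ) (liveGraph κ) := by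
  rw [disjoint_iff_inf_le]
  rintro u v ⟨hpart, hlive⟩
  cases hu : κ u <;> cases hv : κ v <;> simp_all [partGraph, liveGraph]

lemma adj_of_mem_Icc {G : SimpleGraph U}
    (hG : G ∈ Set.Icc (partGraph κ) (partGraph κ ⊔ liveGraph κ)) {u v u' v' : U}
    (hu : κ u = κ u') (hv : κ v = κ v') (hlive : ¬ ((κ u).isLeft ∨ (κ v).isLeft))
    (h : G.Adj u v) : G.Adj u' v' := by
  refine hG.1 ?_
  have hpart : κ u ≠ κ v ∧ (κ u).isRight ∧ (κ v).isRight :=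
    (hG.2 h).resolve_right fun h => hlive h.2
  rwa [hu, hv] at hpart

lemma IsPairTransitive.adj_of_adj {Γ : Subgroup (Equiv.Perm U)} (hΓ : IsPairTransitive Γ κ)
    {G : SimpleGraph U} (hG : G ∈ Set.Icc (partGraph κ) (partGraph κ ⊔ liveGraph κ))
    (hΓG : ∀ g ∈ Γ, ∀ u v, G.Adj u v → G.Adj (g u) (g v)) {u v u' v' : U} (hne : u ≠ v)
    (hne' : u' ≠ v') (hu : κ u = κ u') (hv : κ v = κ v') (h : G.Adj u v) : G.Adj u' v' := by
  by_cases hlive : (κ u).isLeft ∨ (κ v).isLeft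
  · rcases hlive with hleft | hleft
    · obtain ⟨g, hg, rfl, rfl⟩ := hΓ.exists_apply_eq u v u' v' hne hne' hu hv hleft
      exact hΓG g hg u v h
    · obtain ⟨g, hg, rfl, rfl⟩ := hΓ.exists_apply_eq v u v' u' hne.symm hne'.symm hv hu hleft
      exact hΓG g hg u v h
  · exact adj_of_mem_Icc hG hu hv hlive h

lemma comap_mem_Icc {R : SimpleGraph (B ⊕ L)} (hR : ∀ p q, p ≠ q → R.Adj (.inr p) (.inr q)) :
    R.comap κ ∈ Set.Icc (partGraph κ) (partGraph κ ⊔ liveGraph κ) := by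
  constructor
  · rintro u v ⟨hne, hu, hv⟩
    obtain ⟨p, hp⟩ := Sum.isRight_iff.1 hu
    obtain ⟨q, hq⟩ := Sum.isRight_iff.1 hv
    rw [SimpleGraph.comap_adj, hp, hq]
    exact hR p q fun hpq => hne (by rw [hp, hq, hpq])
  · intro u v h
    rcases hu : κ u with b | p
    · exact Or.inr ⟨h.ne, by simp [hu]⟩
    rcases hv : κ v with b | q
    · exact Or.inr ⟨h.ne, by simp [hv]⟩
    · exact Or.inl ⟨R.ne_of_adj h, by simp [hu], by simp [hv]⟩

theorem IsPairTransitive.image_comap [Nonempty V] {Γ : Subgroup (Equiv.Perm U)}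
    (hΓ : IsPairTransitive Γ κ) (hκ : ∀ q, Nonempty (V ↪ κ ⁻¹' {q})) :
    SimpleGraph.comap κ '' {R | (∀ p q, p ≠ q → R.Adj (.inr p) (.inr q)) ∧ IsEmpty (H →g R)} =
      {G | G ∈ Set.Icc (partGraph κ) (partGraph κ ⊔ liveGraph κ) ∧ H.Free G ∧
        ∀ g ∈ Γ, ∀ u v, G.Adj u v → G.Adj (g u) (g v)} := by
  have hfree (R : SimpleGraph (B ⊕ L)) : H.Free (R.comap κ) ↔ IsEmpty (H →g R) := by
    rw [SimpleGraph.Free, isContained_comap_iff hκ, not_nonempty_iff]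
  ext G
  constructor
  · rintro ⟨R, ⟨hR, hHR⟩, rfl⟩
    refine ⟨comap_mem_Icc hR, (hfree R).2 hHR, fun g hg u v h => ?_⟩
    rwa [SimpleGraph.comap_adj, hΓ.label_apply g hg, hΓ.label_apply g hg]
  · rintro ⟨hG, hHG, hΓG⟩
    obtain ⟨R, rfl⟩ := exists_comap_eq hκ hHG fun u v u' v' hne hne' hu hv =>
      hΓ.adj_of_adj hG hΓG hne hne' hu hv
    refine ⟨R, ⟨fun p q hpq => ?_, (hfree R).1 hHG⟩, rfl⟩
    let σ q : κ ⁻¹' {q} := (hκ q).some (Classical.arbitrary V)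
    have hσ (q : B ⊕ L) : κ (σ q) = q := (σ q).2
    have hadj : (partGraph κ).Adj (σ (.inr p)) (σ (.inr q)) := by
      simp [partGraph, hσ, hpq]
    have := hG.1 hadj
    rwa [SimpleGraph.comap_adj, hσ, hσ] at this

lemma choose_two_le_ncard_liveGraph [Fintype U] :
    (Fintype.card U).choose 2 ≤
      (liveGraph κ).edgeSet.ncard + {u | (κ u).isRight}.ncard ^ 2 := by
  classical
  let dead : Set (Sym2 U) :=
    (Function.uncurry Sym2.mk) '' ({u | (κ u).isRight} ×ˢ {u | (κ u).isRight})
  have hcover : (⊤ : SimpleGraph U).edgeSet ⊆ (liveGraph κ).edgeSet ∪ dead := by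
    intro x
    induction x with | _ u v
    intro huv
    by_cases hlive : (κ u).isLeft ∨ (κ v).isLeft
    · exact Or.inl ⟨huv, hlive⟩
    · rw [not_or, Sum.not_isLeft, Sum.not_isLeft] at hlive
      exact Or.inr ⟨(u, v), hlive, rfl⟩
  calc (Fintype.card U).choose 2 = (⊤ : SimpleGraph U).edgeSet.ncard := by
        rw [← SimpleGraph.card_edgeFinset_top_eq_card_choose_two, ← SimpleGraph.coe_edgeFinset,
          Set.ncard_coe_finset]
    _ ≤ ((liveGraph κ).edgeSet ∪ dead).ncard := Set.ncard_le_ncard hcover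
    _ ≤ (liveGraph κ).edgeSet.ncard + dead.ncard := Set.ncard_union_le _ _
    _ ≤ (liveGraph κ).edgeSet.ncard + {u | (κ u).isRight}.ncard ^ 2 := by
        rw [sq, ← Set.ncard_prod]
        gcongr
        exact Set.ncard_image_le

end LabelledVertices

section EdgeSets

open MulAction
open scoped Pointwise

/-- A group acting on `U` acts on the unordered pairs of elements of `U`. -/
instance sym2MulAction {G U : Type*} [Monoid G] [MulAction G U] : MulAction G (Sym2 U) where
  smul g := Sym2.map (g • ·)
  one_smul p := by
    change Sym2.map _ p = p
    simp
  mul_smul g h p := by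
    change Sym2.map _ p = Sym2.map _ (Sym2.map _ p)
    simp [Sym2.map_map, mul_smul]

lemma smul_sym2_mk {G U : Type*} [Monoid G] [MulAction G U] (g : G) (u v : U) :
    g • s(u, v) = s(g • u, g • v) := rfl

lemma mem_fixedPoints_inter_fixedBy_iff {G Ω : Type*} [Group G] [MulAction G Ω] {P : Subgroup G}
    {γ : G} {a : Ω} : a ∈ fixedPoints P Ω ∩ fixedBy Ω γ ↔
      ∀ g ∈ P ⊔ Subgroup.zpowers γ, g • a = a := by
  change _ ↔ P ⊔ Subgroup.zpowers γ ≤ stabilizer G a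
  rw [sup_le_iff, Subgroup.zpowers_le]
  exact and_congr_left' ⟨fun h g hg => h ⟨g, hg⟩, fun h g => h g.2⟩

variable {V U : Type*} {H : SimpleGraph V}

lemma isLowerSet_free_fromEdgeSet :
    IsLowerSet {s : Finset (Sym2 U) | H.Free (SimpleGraph.fromEdgeSet (s : Set (Sym2 U)))} :=
  fun _ _ hsr hs hr => hs (hr.mono_right (SimpleGraph.fromEdgeSet_mono (Finset.coe_subset.2 hsr)))

variable [DecidableEq U]

lemma smul_edgeFinset_eq_iff (G : SimpleGraph U) [Fintype G.edgeSet] {g : Equiv.Perm U} :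
    g • G.edgeFinset = G.edgeFinset ↔ ∀ u v, G.Adj u v → G.Adj (g u) (g v) := by
  have hsub : g • G.edgeFinset ⊆ G.edgeFinset ↔ ∀ u v, G.Adj u v → G.Adj (g u) (g v) := by
    simp [Finset.smul_finset_def, Finset.image_subset_iff, Sym2.forall, smul_sym2_mk]
  rw [← hsub]
  exact ⟨fun h => h.subset, fun h =>
    Finset.eq_of_subset_of_card_le h (Finset.card_smul_finset g _).ge⟩

lemma free_fromEdgeSet_smul_iff (g : Equiv.Perm U) (s : Finset (Sym2 U)) :
    H.Free (SimpleGraph.fromEdgeSet (↑(g • s) : Set (Sym2 U))) ↔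
      H.Free (SimpleGraph.fromEdgeSet (s : Set (Sym2 U))) := by
  refine (SimpleGraph.free_congr_right ⟨g, fun {u v} => ?_⟩).symm
  rw [SimpleGraph.fromEdgeSet_adj, SimpleGraph.fromEdgeSet_adj, Finset.mem_coe, Finset.mem_coe]
  exact and_congr (Finset.smul_mem_smul_finset_iff (b := s(u, v)) g) g.injective.ne_iff

open Classical in
lemma image_edgeFinset [Fintype U] {P : Subgroup (Equiv.Perm U)} {γ : Equiv.Perm U}
    {G₁ G₂ : SimpleGraph U} :
    (fun G : SimpleGraph U => G.edgeFinset) '' {G | G ∈ Set.Icc G₁ G₂ ∧ H.Free G ∧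
      ∀ g ∈ P ⊔ Subgroup.zpowers γ, ∀ u v, G.Adj u v → G.Adj (g u) (g v)} =
    Set.Icc G₁.edgeFinset G₂.edgeFinset ∩
      ({s | H.Free (SimpleGraph.fromEdgeSet (s : Set (Sym2 U)))} ∩
        (fixedPoints P (Finset (Sym2 U)) ∩ fixedBy (Finset (Sym2 U)) γ)) := by
  have hmem (G : SimpleGraph U) :
      (G ∈ Set.Icc G₁ G₂ ∧ H.Free G ∧
        ∀ g ∈ P ⊔ Subgroup.zpowers γ, ∀ u v, G.Adj u v → G.Adj (g u) (g v)) ↔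
      G.edgeFinset ∈ Set.Icc G₁.edgeFinset G₂.edgeFinset ∩
        ({s | H.Free (SimpleGraph.fromEdgeSet (s : Set (Sym2 U)))} ∩
          (fixedPoints P (Finset (Sym2 U)) ∩ fixedBy (Finset (Sym2 U)) γ)) := by
    rw [Set.mem_inter_iff, Set.mem_inter_iff, mem_fixedPoints_inter_fixedBy_iff]
    simp [smul_edgeFinset_eq_iff]
  ext s
  refine ⟨fun ⟨G, hG, hGs⟩ => hGs ▸ (hmem G).1 hG, fun hs => ?_⟩
  have hloop : ∀ p ∈ s, ¬ p.IsDiag := fun p hp =>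
    SimpleGraph.not_isDiag_of_mem_edgeFinset (hs.1.2 hp)
  obtain ⟨G, rfl⟩ : ∃ G : SimpleGraph U, G.edgeFinset = s :=
    ⟨SimpleGraph.fromEdgeSet s, by ext p; simpa using hloop p⟩
  exact ⟨G, (hmem G).2 hs, rfl⟩

end EdgeSets

section Parity

open MulAction
open scoped Pointwise

variable {V : Type*} {H : SimpleGraph V} {U B L : Type} {κ : U → B ⊕ L}

theorem even_ncard_free_invariant_of_depth_lt [Finite U] {P : Subgroup (Equiv.Perm U)}
    (hP : IsPGroup 2 P) {γ : Equiv.Perm U}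
    (hγ : γ ∈ Subgroup.normalizer (P : Set (Equiv.Perm U))) {G₁ G₂ : SimpleGraph U}
    (hG : G₁ ≤ G₂) (hG₁ : ∀ g ∈ P ⊔ Subgroup.zpowers γ, ∀ u v, G₁.Adj u v → G₁.Adj (g u) (g v))
    (hG₂ : ∀ g ∈ P ⊔ Subgroup.zpowers γ, ∀ u v, G₂.Adj u v → G₂.Adj (g u) (g v))
    (T : DecisionTree (Sym2 U))
    (hT : ∀ x, T.eval x = true ↔ H.Free (SimpleGraph.fromEdgeSet {p | x p = true}))
    (hdepth : T.depth < (G₂ \ G₁).edgeSet.ncard) :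
    Even {G | G ∈ Set.Icc G₁ G₂ ∧ H.Free G ∧
      ∀ g ∈ P ⊔ Subgroup.zpowers γ, ∀ u v, G.Adj u v → G.Adj (g u) (g v)}.ncard := by
  classical
  have := Fintype.ofFinite U
  have hinv (G : SimpleGraph U) (hG : ∀ g ∈ P ⊔ Subgroup.zpowers γ, ∀ u v,
      G.Adj u v → G.Adj (g u) (g v)) :
      G.edgeFinset ∈ fixedPoints P (Finset (Sym2 U)) ∩ fixedBy (Finset (Sym2 U)) γ :=
    mem_fixedPoints_inter_fixedBy_iff.2 fun g hg => (smul_edgeFinset_eq_iff G).2 (hG g hg)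
  have hcard : T.depth < (G₂.edgeFinset \ G₁.edgeFinset).card := by
    rwa [← Set.ncard_coe_finset, Finset.coe_sdiff, SimpleGraph.coe_edgeFinset,
      SimpleGraph.coe_edgeFinset, ← SimpleGraph.edgeSet_sdiff]
  rw [← Set.ncard_image_of_injective _ fun _ _ => SimpleGraph.edgeFinset_inj.1, image_edgeFinset]
  refine even_ncard_invariant_of_depth_lt hP hγ isLowerSet_free_fromEdgeSet
    free_fromEdgeSet_smul_iff (hinv G₁ hG₁) (hinv G₂ hG₂) T (SimpleGraph.edgeFinset_mono hG)
    (fun s _ => (hT _).trans ?_) hcard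
  simp only [decide_eq_true_eq]
  rfl

theorem IsPairTransitive.even_ncard_isEmpty_hom [Finite U] [Nonempty V]
    {P : Subgroup (Equiv.Perm U)} (hP : IsPGroup 2 P) {γ : Equiv.Perm U}
    (hγ : γ ∈ Subgroup.normalizer (P : Set (Equiv.Perm U)))
    (hΓ : IsPairTransitive (P ⊔ Subgroup.zpowers γ) κ)
    (hκ : ∀ q, Nonempty (V ↪ κ ⁻¹' {q})) (T : DecisionTree (Sym2 U))
    (hT : ∀ x, T.eval x = true ↔ H.Free (SimpleGraph.fromEdgeSet {p | x p = true}))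
    (hdepth : T.depth < (liveGraph κ).edgeSet.ncard) :
    Even {R : SimpleGraph (B ⊕ L) |
      (∀ p q, p ≠ q → R.Adj (.inr p) (.inr q)) ∧ IsEmpty (H →g R)}.ncard := by
  have := Fintype.ofFinite U
  have hsurj : Function.Surjective κ := fun q => ⟨_, ((hκ q).some (Classical.arbitrary V)).2⟩
  rw [← Set.ncard_image_of_injective _ (comap_injective hsurj), hΓ.image_comap hκ]
  refine even_ncard_free_invariant_of_depth_lt hP hγ le_sup_left
    (fun g hg _ _ => hΓ.partGraph_adj hg)
    (fun g hg _ _ => Or.imp (hΓ.partGraph_adj hg) (hΓ.liveGraph_adj hg)) T hT ?_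
  rwa [disjoint_partGraph_liveGraph.sup_sdiff_cancel_left]

end Parity

section QueryComplexity

namespace DecisionTree

/-- The decision tree that queries `φ i` wherever the given one queries `i`. -/
def map {ι ι' : Type} (φ : ι → ι') : DecisionTree ι → DecisionTree ι'
  | leaf b => leaf b
  | node i t f => node (φ i) (t.map φ) (f.map φ)

lemma eval_map {ι ι' : Type} (φ : ι → ι') (T : DecisionTree ι) (x : ι' → Bool) :
    (T.map φ).eval x = T.eval (x ∘ φ) := by
  induction T with
  | leaf b => rfl
  | node i t f iht ihf => simp [map, eval, iht, ihf]

lemma depth_map {ι ι' : Type} (φ : ι → ι') (T : DecisionTree ι) : (T.map φ).depth = T.depth := by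
  induction T with
  | leaf b => rfl
  | node i t f iht ihf => rw [map, depth, depth, iht, ihf]

lemma exists_eval_eq_of_dependsOn {ι : Type} {f : (ι → Bool) → Bool} {A : Finset ι}
    (hf : DependsOn f (A : Set ι)) : ∃ T : DecisionTree ι, ∀ x, T.eval x = f x := by
  classical
  induction A using Finset.induction_on generalizing f with
  | empty => exact ⟨.leaf (f fun _ => true), fun x => hf (by simp)⟩
  | insert a A ha ih =>
    have hupdate (b : Bool) : ∃ T : DecisionTree ι, ∀ x, T.eval x = f (Function.update x a b) :=
      ih fun x y h => hf fun i hi => by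
        by_cases hia : i = a
        · subst hia; simp
        · simpa [hia] using h i ((Finset.mem_insert.1 hi).resolve_left hia)
    obtain ⟨T, hT⟩ := hupdate true
    obtain ⟨F, hF⟩ := hupdate false
    refine ⟨.node a T F, fun x => ?_⟩
    rw [eval, hT, hF]
    cases h : x a <;> simp [← h]

end DecisionTree

instance (n : ℕ) : Finite (EdgeVar n) :=
  inferInstanceAs (Finite {p : Fin n × Fin n // p.1 < p.2})

lemma exists_depth_le_queryComplexity {n : ℕ} (P : Set (SimpleGraph (Fin n))) :
    ∃ T : DecisionTree (EdgeVar n),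
      (∀ x, T.eval x = true ↔ graphOfInput x ∈ P) ∧ T.depth ≤ queryComplexity P := by
  classical
  refine Nat.sInf_mem (s := {d | ∃ T : DecisionTree (EdgeVar n),
    (∀ x, T.eval x = true ↔ graphOfInput x ∈ P) ∧ T.depth ≤ d}) ?_
  have := Fintype.ofFinite (EdgeVar n)
  obtain ⟨T, hT⟩ := DecisionTree.exists_eval_eq_of_dependsOn (A := Finset.univ)
    (f := fun x : EdgeVar n → Bool => decide (graphOfInput x ∈ P)) fun x y h => by
      rw [funext fun i => h i (Finset.mem_coe.2 (Finset.mem_univ i))]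
  exact ⟨T.depth, T, by simp [hT], le_rfl⟩

lemma comap_graphOfInput {U : Type*} {n : ℕ} (e : U ≃ Fin n) (x : Sym2 U → Bool) :
    (graphOfInput fun p => x s(e.symm p.1.1, e.symm p.1.2)).comap e =
      SimpleGraph.fromEdgeSet {p | x p = true} := by
  ext u v
  rw [SimpleGraph.comap_adj, graphOfInput, SimpleGraph.fromRel_adj, SimpleGraph.fromEdgeSet_adj]
  rcases lt_trichotomy (e u) (e v) with h | h | h
  · simp [h, h.not_gt, ne_of_apply_ne e h.ne, h.ne]
  · simp [e.injective h]
  · simp [h, h.not_gt, ne_of_apply_ne e h.ne', h.ne', Sym2.eq_swap]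

variable {V U B L : Type} {H : SimpleGraph V} {κ : U → B ⊕ L}

lemma graphOfInput_mem_forbiddenSubgraphProperty_iff {n : ℕ} (e : U ≃ Fin n)
    (x : Sym2 U → Bool) :
    (graphOfInput fun p => x s(e.symm p.1.1, e.symm p.1.2)) ∈ ForbiddenSubgraphProperty H n ↔
      H.Free (SimpleGraph.fromEdgeSet {p | x p = true}) := by
  rw [← comap_graphOfInput e, SimpleGraph.free_congr_right (SimpleGraph.Iso.comap e _)]
  exact not_congr containsCopy_iff_isContained

theorem IsPairTransitive.choose_two_le_depth_add_sq [Fintype U] [Nonempty V]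
    {P : Subgroup (Equiv.Perm U)} (hP : IsPGroup 2 P) {γ : Equiv.Perm U}
    (hγ : γ ∈ Subgroup.normalizer (P : Set (Equiv.Perm U)))
    (hΓ : IsPairTransitive (P ⊔ Subgroup.zpowers γ) κ) (hκ : ∀ q, Nonempty (V ↪ κ ⁻¹' {q}))
    (hodd : Odd {R : SimpleGraph (B ⊕ L) |
      (∀ p q, p ≠ q → R.Adj (.inr p) (.inr q)) ∧ IsEmpty (H →g R)}.ncard)
    {n : ℕ} (hn : Fintype.card U = n) (T : DecisionTree (EdgeVar n))
    (hT : ∀ x, T.eval x = true ↔ graphOfInput x ∈ ForbiddenSubgraphProperty H n) :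
    n.choose 2 ≤ T.depth + {u | (κ u).isRight}.ncard ^ 2 := by
  let e : U ≃ Fin n := Fintype.equivFinOfCardEq hn
  let φ (p : EdgeVar n) : Sym2 U := s(e.symm p.1.1, e.symm p.1.2)
  suffices hdepth : ¬ T.depth < (liveGraph κ).edgeSet.ncard by
    subst hn
    exact choose_two_le_ncard_liveGraph.trans (Nat.add_le_add_right (not_lt.1 hdepth) _)
  intro hdepth
  refine Nat.not_even_iff_odd.2 hodd (hΓ.even_ncard_isEmpty_hom hP hγ hκ (T.map φ) (fun x => ?_) ?_)
  · rw [T.eval_map, hT]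
    exact graphOfInput_mem_forbiddenSubgraphProperty_iff e x
  · rwa [T.depth_map]

end QueryComplexity

section BlockSpace

/-- Vertices arranged in blocks, each carrying a field structure, and in cyclic parts. -/
abbrev BlockSpace {B L : Type*} (F : B → Type*) (w : L → ℕ) : Type _ :=
  (Σ b, F b) ⊕ (Σ p, ZMod (w p))

namespace BlockSpace

variable {B L : Type*}

/-- The block or part of a vertex. -/
def label (F : B → Type*) (w : L → ℕ) : BlockSpace F w → B ⊕ L := Sum.map Sigma.fst Sigma.fst

variable {F : B → Type*} {w : L → ℕ}

lemma nonempty_embedding_fibre {V : Type*} (hF : ∀ b, Nonempty (V ↪ F b))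
    (hw : ∀ p, Nonempty (V ↪ ZMod (w p))) (q : B ⊕ L) :
    Nonempty (V ↪ label F w ⁻¹' {q}) := by
  rcases q with b | p
  · obtain ⟨e⟩ := hF b
    exact ⟨⟨fun v => ⟨.inl ⟨b, e v⟩, rfl⟩, fun v v' h =>
      e.injective (by simpa [Subtype.ext_iff] using h)⟩⟩
  · obtain ⟨e⟩ := hw p
    exact ⟨⟨fun v => ⟨.inr ⟨p, e v⟩, rfl⟩, fun v v' h =>
      e.injective (by simpa [Subtype.ext_iff] using h)⟩⟩

lemma ncard_isRight_label [Fintype L] [∀ p, NeZero (w p)] :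
    {u | (label F w u).isRight}.ncard = ∑ p, w p := by
  have hrange : {u | (label F w u).isRight} = Set.range Sum.inr := by
    ext (u | u) <;> simp [label]
  rw [hrange, ← Set.image_univ, Set.ncard_image_of_injective _ Sum.inr_injective, Set.ncard_univ,
    Nat.card_sigma]
  simp

variable (F w) [∀ b, Field (F b)]

/-- The independent translations of the blocks; the parts are fixed pointwise. -/
def translation : Multiplicative (∀ b, F b) →* Equiv.Perm (BlockSpace F w) where
  toFun g :=
    Equiv.sumCongr (Equiv.sigmaCongrRight fun b => Equiv.addLeft (g.toAdd b)) (Equiv.refl _)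
  map_one' := by ext (⟨b, x⟩ | u) <;> simp
  map_mul' g h := by ext (⟨b, x⟩ | u) <;> simp

lemma isPGroup_range_translation [∀ b, CharP (F b) 2] : IsPGroup 2 (translation F w).range := by
  rintro ⟨_, g, rfl⟩
  refine ⟨1, Subtype.ext ?_⟩
  have hg : g ^ 2 = 1 := Multiplicative.toAdd.injective <| funext fun b =>
    (two_nsmul _).trans (CharTwo.add_self_eq_zero _)
  rw [pow_one, Subgroup.coe_pow, ← map_pow, hg, map_one, Subgroup.coe_one]

variable {F}

/-- Multiplication by a unit on every block together with a rotation of every part. -/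
def dilation (ζ : ∀ b, (F b)ˣ) : Equiv.Perm (BlockSpace F w) :=
  Equiv.sumCongr (Equiv.sigmaCongrRight fun b => (ζ b).mulLeft)
    (Equiv.sigmaCongrRight fun p => Equiv.addRight (1 : ZMod (w p)))

variable (ζ : ∀ b, (F b)ˣ)

lemma dilation_mem_normalizer [Finite B] [∀ b, Finite (F b)] :
    dilation w ζ ∈ Subgroup.normalizer ((translation F w).range : Set (Equiv.Perm _)) := by
  have : Finite (translation F w).range := Set.finite_range (translation F w)
  refine Subgroup.mem_normalizer_fintype ?_
  rintro _ ⟨g, rfl⟩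
  refine ⟨.ofAdd fun b => ζ b * g.toAdd b, eq_mul_inv_of_mul_eq ?_⟩
  ext (⟨b, x⟩ | u) <;> simp [translation, dilation, mul_add]

lemma dilation_pow_inl (k : ℕ) (b : B) (x : F b) :
    (dilation w ζ ^ k) (.inl ⟨b, x⟩) = .inl ⟨b, ((ζ b ^ k : (F b)ˣ) : F b) * x⟩ := by
  induction k with
  | zero => simp
  | succ k ih =>
    rw [pow_succ', Equiv.Perm.mul_apply, ih, pow_succ', Units.val_mul, mul_assoc]
    rfl

lemma dilation_pow_inr (k : ℕ) (p : L) (z : ZMod (w p)) :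
    (dilation w ζ ^ k) (.inr ⟨p, z⟩) = .inr ⟨p, z + k⟩ := by
  induction k with
  | zero => simp
  | succ k ih =>
    rw [pow_succ', Equiv.Perm.mul_apply, ih, Nat.cast_succ, ← add_assoc]
    rfl

/-- The permutations of the vertices generated by the translations and a dilation. -/
def affineGroup : Subgroup (Equiv.Perm (BlockSpace F w)) :=
  (translation F w).range ⊔ Subgroup.zpowers (dilation w ζ)

variable {w ζ}

lemma label_apply_of_mem_affineGroup {g : Equiv.Perm (BlockSpace F w)}
    (hg : g ∈ affineGroup w ζ) (u : BlockSpace F w) : label F w (g u) = label F w u := by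
  let S : Subgroup (Equiv.Perm (BlockSpace F w)) :=
    { carrier := {g | ∀ u, label F w (g u) = label F w u}
      one_mem' := fun _ => rfl
      mul_mem' := fun {g h} hg hh u => (hg (h u)).trans (hh u)
      inv_mem' := fun {g} hg u => by
        rw [← hg, ← Equiv.Perm.mul_apply, mul_inv_cancel, Equiv.Perm.one_apply] }
  suffices h : affineGroup w ζ ≤ S from h hg u
  refine sup_le ?_ (Subgroup.zpowers_le.2 ?_)
  · rintro _ ⟨g, rfl⟩ (u | u) <;> rfl
  · rintro (u | u) <;> rfl

lemma translation_mul_dilation_pow_mem (g : ∀ b, F b) (k : ℕ) :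
    translation F w (.ofAdd g) * dilation w ζ ^ k ∈ affineGroup w ζ :=
  Subgroup.mul_mem_sup ⟨_, rfl⟩ (Subgroup.npow_mem_zpowers _ k)

lemma translation_mul_dilation_pow_inl (g : ∀ b, F b) (k : ℕ) (b : B) (x : F b) :
    (translation F w (.ofAdd g) * dilation w ζ ^ k) (.inl ⟨b, x⟩) =
      .inl ⟨b, g b + ((ζ b ^ k : (F b)ˣ) : F b) * x⟩ := by
  rw [Equiv.Perm.mul_apply, dilation_pow_inl]
  rfl

lemma translation_mul_dilation_pow_inr (g : ∀ b, F b) (k : ℕ) (p : L) (z : ZMod (w p)) :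
    (translation F w (.ofAdd g) * dilation w ζ ^ k) (.inr ⟨p, z⟩) = .inr ⟨p, z + k⟩ := by
  rw [Equiv.Perm.mul_apply, dilation_pow_inr]
  rfl

lemma exists_mem_affineGroup_same_block (hζ : ∀ b (y : (F b)ˣ), ∃ k : ℕ, ζ b ^ k = y) {b : B}
    {x y x' y' : F b} (hxy : x ≠ y) (hxy' : x' ≠ y') : ∃ g ∈ affineGroup w ζ,
      g (.inl ⟨b, x⟩) = .inl ⟨b, x'⟩ ∧ g (.inl ⟨b, y⟩) = .inl ⟨b, y'⟩ := by
  classical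
  have hsub : y - x ≠ 0 := sub_ne_zero.2 hxy.symm
  have hsub' : y' - x' ≠ 0 := sub_ne_zero.2 hxy'.symm
  obtain ⟨k, hk⟩ := hζ b (Units.mk0 _ hsub' / Units.mk0 _ hsub)
  have hslope : ((ζ b ^ k : (F b)ˣ) : F b) * (y - x) = y' - x' := by
    rw [hk, Units.val_div_eq_div_val, Units.val_mk0, Units.val_mk0, div_mul_cancel₀ _ hsub]
  refine ⟨_, translation_mul_dilation_pow_mem (Pi.single b (x' - ((ζ b ^ k : (F b)ˣ) : F b) * x)) k,
    ?_, ?_⟩ <;> rw [translation_mul_dilation_pow_inl, Pi.single_eq_same]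
  · rw [sub_add_cancel]
  · rw [sub_add_eq_add_sub, add_sub_assoc, ← mul_sub, hslope, add_sub_cancel]

lemma exists_mem_affineGroup_distinct_blocks {b c : B} (hbc : b ≠ c) (x x' : F b) (y y' : F c) :
    ∃ g ∈ affineGroup w ζ, g (.inl ⟨b, x⟩) = .inl ⟨b, x'⟩ ∧ g (.inl ⟨c, y⟩) = .inl ⟨c, y'⟩ := by
  classical
  refine ⟨_, translation_mul_dilation_pow_mem (Pi.single b (x' - x) + Pi.single c (y' - y)) 0,
    ?_, ?_⟩ <;> rw [translation_mul_dilation_pow_inl] <;> simp [hbc, hbc.symm]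

lemma exists_mem_affineGroup_block_part [∀ p, NeZero (w p)] {b : B} {p : L} (x x' : F b)
    (z z' : ZMod (w p)) : ∃ g ∈ affineGroup w ζ,
      g (.inl ⟨b, x⟩) = .inl ⟨b, x'⟩ ∧ g (.inr ⟨p, z⟩) = .inr ⟨p, z'⟩ := by
  classical
  let k := (z' - z).val
  refine ⟨_, translation_mul_dilation_pow_mem (Pi.single b (x' - ((ζ b ^ k : (F b)ˣ) : F b) * x)) k,
    ?_, ?_⟩
  · rw [translation_mul_dilation_pow_inl, Pi.single_eq_same, sub_add_cancel]
  · rw [translation_mul_dilation_pow_inr, ZMod.natCast_zmod_val, add_sub_cancel]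

theorem isPairTransitive_affineGroup [∀ p, NeZero (w p)]
    (hζ : ∀ b (y : (F b)ˣ), ∃ k : ℕ, ζ b ^ k = y) :
    IsPairTransitive (affineGroup w ζ) (label F w) where
  label_apply _ := label_apply_of_mem_affineGroup
  exists_apply_eq := by
    rintro (⟨b, x⟩ | _) v (⟨b', x'⟩ | _) v' hne hne' hu hv hleft
    · obtain rfl : b = b' := Sum.inl_injective hu
      rcases v with ⟨c, y⟩ | ⟨p, z⟩ <;> rcases v' with ⟨c', y'⟩ | ⟨p', z'⟩
      · obtain rfl : c = c' := Sum.inl_injective hv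
        rcases eq_or_ne b c with rfl | hbc
        · exact exists_mem_affineGroup_same_block hζ (fun h => hne (by rw [h]))
            fun h => hne' (by rw [h])
        · exact exists_mem_affineGroup_distinct_blocks hbc x x' y y'
      · cases hv
      · cases hv
      · obtain rfl : p = p' := Sum.inr_injective hv
        exact exists_mem_affineGroup_block_part x x' z z'
    all_goals simp_all [label]

end BlockSpace

end BlockSpace

section BlockSizes

lemma exists_sum_two_pow_eq (b : ℕ) : ∀ x < 2 ^ b, ∃ s : Fin (b + 1) → ℕ,
    ∑ i, 2 ^ s i = b + 1 + x := by
  induction b with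
  | zero => exact fun x hx => ⟨0, by simp [Nat.lt_one_iff.1 hx]⟩
  | succ b ih =>
    intro x hx
    let t := Nat.log 2 (x + 1)
    have hle : 2 ^ t ≤ x + 1 := Nat.pow_log_le_self 2 x.succ_ne_zero
    have hlt : x + 1 < 2 ^ (t + 1) := Nat.lt_pow_succ_log_self one_lt_two _
    have hrest : x + 1 - 2 ^ t < 2 ^ b := by
      rw [pow_succ] at hx hlt
      rcases Nat.lt_or_ge b t with hbt | htb
      · have := Nat.pow_le_pow_right two_pos (Nat.succ_le_of_lt hbt)
        rw [Nat.succ_eq_add_one, pow_succ] at this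
        omega
      · have := Nat.pow_le_pow_right two_pos htb
        omega
    obtain ⟨s, hs⟩ := ih _ hrest
    refine ⟨Fin.cons t s, ?_⟩
    rw [Fin.sum_univ_succ]
    simp only [Fin.cons_zero, Fin.cons_succ, hs]
    omega

lemma succ_sq_le_two_pow {b : ℕ} (hb : 6 ≤ b) : (b + 1) ^ 2 ≤ 2 ^ b := by
  induction b, hb using Nat.le_induction with
  | base => norm_num
  | succ b hb ih =>
    rw [pow_succ 2]
    nlinarith

lemma exists_sum_two_pow_eq_of_lt_card_sq {B : Type*} [Fintype B] {M : ℕ}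
    (hB : 7 ≤ Fintype.card B) (hle : Fintype.card B ≤ M) (hlt : M < Fintype.card B ^ 2) :
    ∃ s : B → ℕ, ∑ b, 2 ^ s b = M := by
  obtain ⟨b, hb⟩ := Nat.exists_eq_add_of_le' (Nat.one_le_of_lt hB)
  rw [hb] at hB hle hlt
  have hsq := succ_sq_le_two_pow (Nat.le_of_succ_le_succ hB)
  obtain ⟨s, hs⟩ := exists_sum_two_pow_eq b (M - (b + 1)) (by omega)
  let e : B ≃ Fin (b + 1) := Fintype.equivFinOfCardEq hb
  refine ⟨s ∘ e, (e.sum_comp fun i => 2 ^ s i).trans ?_⟩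
  rw [hs, Nat.add_sub_cancel' hle]

lemma exists_two_pow_two_pow_le_lt_sq {M : ℕ} (hM : 2 ≤ M) :
    ∃ a, 2 ^ 2 ^ a ≤ M ∧ M < (2 ^ 2 ^ a) ^ 2 := by
  have hlog : Nat.log 2 M ≠ 0 := (Nat.log_pos one_lt_two hM).ne'
  refine ⟨Nat.log 2 (Nat.log 2 M), ?_, ?_⟩
  · exact (Nat.pow_le_pow_right two_pos (Nat.pow_log_le_self 2 hlog)).trans
      (Nat.pow_log_le_self 2 (by omega))
  · rw [← pow_mul, ← pow_succ]
    exact (Nat.lt_pow_succ_log_self one_lt_two M).trans_le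
      (Nat.pow_le_pow_right two_pos (Nat.lt_pow_succ_log_self one_lt_two _))

lemma exists_sum_two_pow_index_eq {l M : ℕ} (hM : (l + 1) ^ 2 + 49 ≤ M) :
    ∃ a, l < 2 ^ 2 ^ a ∧ ∃ s : (Fin (2 ^ a) → ZMod 2) → ℕ, ∑ b, 2 ^ s b = M := by
  obtain ⟨a, hle, hlt⟩ := exists_two_pow_two_pow_le_lt_sq (M := M) (by omega)
  have hcard : Fintype.card (Fin (2 ^ a) → ZMod 2) = 2 ^ 2 ^ a := by simp [ZMod.card]
  refine ⟨a, by nlinarith, exists_sum_two_pow_eq_of_lt_card_sq ?_ ?_ ?_⟩ <;> rw [hcard]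
  · nlinarith
  · exact hle
  · exact hlt

lemma exists_block_sizes (m : ℕ) {l : ℕ} (hl : 0 < l) : ∃ n₀, ∀ n ≥ n₀, ∃ a, l < 2 ^ 2 ^ a ∧
    ∃ (s : (Fin (2 ^ a) → ZMod 2) → ℕ) (w : Fin l → ℕ), (∀ b, m ≤ s b) ∧ (∀ p, 2 ^ m ≤ w p) ∧
      ∑ p, w p ≤ (l + 1) * 2 ^ m ∧ ∑ b, 2 ^ s b + ∑ p, w p = n := by
  have hpos : 0 < 2 ^ m := Nat.two_pow_pos m
  refine ⟨((l + 1) ^ 2 + 49 + l) * 2 ^ m, fun n hn => ?_⟩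
  have hdiv : (l + 1) ^ 2 + 49 + l ≤ n / 2 ^ m := (Nat.le_div_iff_mul_le hpos).2 hn
  obtain ⟨a, hal, s, hs⟩ := exists_sum_two_pow_index_eq (l := l) (M := n / 2 ^ m - l) (by omega)
  let w (p : Fin l) : ℕ := 2 ^ m + if p = ⟨0, hl⟩ then n % 2 ^ m else 0
  have hw : ∑ p, w p = l * 2 ^ m + n % 2 ^ m := by simp [w, Finset.sum_add_distrib]
  refine ⟨a, hal, fun b => m + s b, w, fun b => Nat.le_add_right _ _,
    fun p => Nat.le_add_right _ _, ?_, ?_⟩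
  · rw [hw, Nat.succ_mul]
    exact Nat.add_le_add_left (Nat.mod_lt n hpos).le _
  · simp only [pow_add, ← Finset.mul_sum, hs, hw]
    rw [mul_comm, ← add_assoc, ← add_mul, Nat.sub_add_cancel (by omega), Nat.div_add_mod']

end BlockSizes

section MainTheorem

lemma exists_chromaticNumber_eq_add_one {V : Type*} [Finite V] {H : SimpleGraph V}
    (hH : H.edgeSet.Nonempty) : ∃ l : ℕ, 0 < l ∧ H.chromaticNumber = l + 1 := by
  have := Fintype.ofFinite V
  obtain ⟨⟨u, v⟩, huv⟩ := hH
  obtain ⟨χ, hχ⟩ := ENat.ne_top_iff_exists.1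
    (SimpleGraph.chromaticNumber_ne_top_iff_exists.2 ⟨_, H.colorable_of_fintype⟩)
  have htwo : 2 ≤ H.chromaticNumber := SimpleGraph.two_le_chromaticNumber_of_adj huv
  rw [← hχ] at htwo ⊢
  norm_cast at htwo
  refine ⟨χ - 1, by omega, ?_⟩
  norm_cast
  omega

theorem choose_two_le_depth_add_sum_sq {V : Type} [Fintype V] [Nonempty V] {H : SimpleGraph V}
    {a l n : ℕ} (hH : H.chromaticNumber = l + 1) (hl : 0 < l) (hal : l < 2 ^ 2 ^ a)
    {s : (Fin (2 ^ a) → ZMod 2) → ℕ} {w : Fin l → ℕ} (hs : ∀ b, Fintype.card V ≤ s b)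
    (hw : ∀ p, 2 ^ Fintype.card V ≤ w p) (hn : ∑ b, 2 ^ s b + ∑ p, w p = n)
    (T : DecisionTree (EdgeVar n))
    (hT : ∀ x, T.eval x = true ↔ graphOfInput x ∈ ForbiddenSubgraphProperty H n) :
    n.choose 2 ≤ T.depth + (∑ p, w p) ^ 2 := by
  have : Fact (Nat.Prime 2) := ⟨Nat.prime_two⟩
  have : Nonempty (Fin l) := ⟨⟨0, hl⟩⟩
  have (p : Fin l) : NeZero (w p) := ⟨((Nat.two_pow_pos _).trans_le (hw p)).ne'⟩
  let F (b : Fin (2 ^ a) → ZMod 2) : Type := GaloisField 2 (s b)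
  have _ (b) : Fintype (F b) := Fintype.ofFinite _
  have hF (b) : Fintype.card (F b) = 2 ^ s b := by
    rw [← Nat.card_eq_fintype_card]
    exact GaloisField.card 2 _ (Fintype.card_pos.trans_le (hs b)).ne'
  have hU : Fintype.card (BlockSpace F w) = n := by simp [hF, ZMod.card, hn]
  choose ζ hζ using fun b => IsCyclic.exists_generator (α := (F b)ˣ)
  have hVF (b) : Nonempty (V ↪ F b) := Function.Embedding.nonempty_of_card_le <| by
    rw [hF]
    exact (hs b).trans Nat.lt_two_pow_self.le
  have hVw (p) : Nonempty (V ↪ ZMod (w p)) := Function.Embedding.nonempty_of_card_le <| by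
    rw [ZMod.card]
    exact Nat.lt_two_pow_self.le.trans (hw p)
  rw [← BlockSpace.ncard_isRight_label (F := F)]
  exact (BlockSpace.isPairTransitive_affineGroup fun b y =>
      mem_powers_iff_mem_zpowers.2 (hζ b y)).choose_two_le_depth_add_sq
    (BlockSpace.isPGroup_range_translation F w) (BlockSpace.dilation_mem_normalizer w ζ)
    (BlockSpace.nonempty_embedding_fibre hVF hVw)
    (odd_ncard_isEmpty_hom (by simpa using hH) (by simpa using hal)) hU T hT

end MainTheorem

/-- For every finite graph `H` with at least one edge there is a constant `C_H` such
that the query complexity of `Q_n^H` is at least `n(n-1)/2 - C_H` for all `n`. -/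
theorem forbidden_subgraph_query_complexity_lower_bound
    {V : Type} [Fintype V] (H : SimpleGraph V) (hH : H.edgeSet.Nonempty) :
    ∃ C : ℕ, ∀ n : ℕ, n * (n - 1) / 2 - C ≤ queryComplexity (ForbiddenSubgraphProperty H n) := by
  obtain ⟨⟨v, -⟩, -⟩ := id hH
  have : Nonempty V := ⟨v⟩
  obtain ⟨l, hl, hχ⟩ := exists_chromaticNumber_eq_add_one hH
  obtain ⟨n₀, hn₀⟩ := exists_block_sizes (Fintype.card V) hl
  refine ⟨n₀ ^ 2 + ((l + 1) * 2 ^ Fintype.card V) ^ 2, fun n => ?_⟩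
  rcases Nat.lt_or_ge n n₀ with hn | hn
  · have hsmall : n * (n - 1) / 2 ≤ n₀ ^ 2 := (Nat.div_le_self _ _).trans <|
      (Nat.mul_le_mul hn.le ((Nat.sub_le _ _).trans hn.le)).trans_eq (sq n₀).symm
    omega
  obtain ⟨a, hal, s, w, hs, hw, hwle, hsum⟩ := hn₀ n hn
  obtain ⟨T, hT, hdepth⟩ := exists_depth_le_queryComplexity (ForbiddenSubgraphProperty H n)
  have hmain := choose_two_le_depth_add_sum_sq hχ hl hal hs hw hsum T hT
  have hsq := Nat.pow_le_pow_left hwle 2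
  rw [Nat.choose_two_right] at hmain
  omega
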